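/- arXiv:2404.06959 — 6 statements merged into one kernel-verified Lean document; each statement's English description precedes it below -/
import Mathlib

section
/- Let P be a nonzero finite-dimensional unital C*-algebra, τ a faithful tracial state on P, and (λ_i) a right quasi-basis for τ. Then for every minimal central projection p of P one has (Σ_i λ_i λ_i*)·p = (dim_ℂ(pP)/τ(p))·p; equivalently, Σ_i λ_i λ_i* = Σ_{j=1}^k (n_j²/τ(p_j))·p_j, where p_1, …, p_k are the minimal central projections of P and n_j² = dim_ℂ(p_j P). -/
/-!
Put `T = ∑ i, l i * star (l i)`. Since `τ` is a nondegenerate trace, the quasi-basis identity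
dualises to `x = ∑ i, τ (x * star (l i)) • l i`, which writes left multiplication by `a` as a sum
of rank-one maps and gives `τ (a * T) = Tr (L_a)`, where `L_a` is left multiplication by `a` on `P`
(`trace_mulLeft_eq`). As `Tr (L_(a * b)) = Tr (L_(b * a))`, nondegeneracy makes `T` central.
By minimality of `p`, a central element of `p P` is a scalar multiple of `p`
(`IsMinCentralProjection.exists_smul_eq`), so `T * p = c • p`; applying `τ` gives
`c * τ p = Tr (L_p) = dim (p P)`, because `L_p` is idempotent with range `p P`.
-/

/-- A minimal central projection of `P`. -/
def IsMinCentralProjection {P : Type*} [Ring P] [StarRing P] (p : P) : Prop :=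
  p ≠ 0 ∧ p * p = p ∧ star p = p ∧ (∀ x : P, p * x = x * p) ∧
  ∀ q : P, q * q = q → star q = q → (∀ x : P, q * x = x * q) → q * p = q → q = 0 ∨ q = p

section CStar

variable {P : Type*} [NormedRing P] [StarRing P] [CStarRing P]

lemma eq_zero_of_central_of_mul_self {u : P} (hu : ∀ x : P, u * x = x * u) (h : u * u = 0) :
    u = 0 := by
  rw [← CStarRing.star_mul_self_eq_zero_iff]
  have hs : IsSelfAdjoint (star u * u) := IsSelfAdjoint.star_mul_self u
  rw [← CStarRing.star_mul_self_eq_zero_iff, hs.star_eq]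
  calc star u * u * (star u * u) = star u * (u * star u) * u := by noncomm_ring
    _ = star u * star u * (u * u) := by rw [hu (star u)]; noncomm_ring
    _ = 0 := by rw [h, mul_zero]

/-- With `d = (1 - star e) * e` one has `star d * d = 0`, whence `e = star e * e`. -/
lemma star_eq_of_central_idempotent {e : P} (he : ∀ x : P, e * x = x * e) (h : e * e = e) :
    star e = e := by
  have hd : e - star e * e = 0 := by
    rw [← CStarRing.star_mul_self_eq_zero_iff]
    have h1 : star e * star e = star e := by rw [← star_mul, h]
    have h2 : e * star e = star e * e := he _
    simp only [star_sub, star_mul, star_star, mul_sub, sub_mul]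
    have h3 : star e * e * (star e * e) = star e * e := by
      rw [mul_assoc, ← mul_assoc e, h2, mul_assoc, h, ← mul_assoc, h1]
    have h4 : star e * (star e * e) = star e * e := by rw [← mul_assoc, h1]
    have h5 : star e * e * e = star e * e := by rw [mul_assoc, h]
    rw [h3, h4, h5]
    simp
  have h1 : e = star e * e := sub_eq_zero.mp hd
  calc star e = star (star e * e) := by rw [← h1]
    _ = star e * e := by simp
    _ = e := h1.symm

variable [NormedAlgebra ℂ P] [FiniteDimensional ℂ P]

/-- The centre is a reduced finite-dimensional algebra, hence von Neumann regular: multiplication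
by `y` and by `y * y` on it have the same kernel, so by rank-nullity the same range. -/
lemma exists_central_eq_mul_mul {y : P} (hy : ∀ x : P, y * x = x * y) :
    ∃ h : P, (∀ x : P, h * x = x * h) ∧ y = y * y * h := by
  let Y : Subalgebra.center ℂ P := ⟨y, Subalgebra.mem_center_iff.mpr fun b => (hy b).symm⟩
  let f := LinearMap.mulLeft ℂ Y
  let g := LinearMap.mulLeft ℂ (Y * Y)
  have hker : LinearMap.ker g = LinearMap.ker f := by
    ext x
    simp only [LinearMap.mem_ker, f, g, LinearMap.mulLeft_apply]
    constructor
    · intro h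
      have h0 : (Y * x) * (Y * x) = 0 := by
        calc (Y * x) * (Y * x) = (Y * Y * x) * x := by ring
          _ = 0 := by rw [h, zero_mul]
      apply Subtype.ext
      apply eq_zero_of_central_of_mul_self
      · intro b
        exact (Subalgebra.mem_center_iff.mp (Y * x).2 b).symm
      · exact congrArg Subtype.val h0
    · intro h
      rw [mul_assoc, h, mul_zero]
  have hle : LinearMap.range g ≤ LinearMap.range f := by
    rintro _ ⟨x, rfl⟩
    exact ⟨Y * x, by simp [f, g]⟩
  have hrange : LinearMap.range g = LinearMap.range f := by
    apply Submodule.eq_of_le_of_finrank_eq hle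
    have h1 := LinearMap.finrank_range_add_finrank_ker f
    have h2 := LinearMap.finrank_range_add_finrank_ker g
    rw [hker] at h2
    omega
  have hmem : Y ∈ LinearMap.range g := by
    rw [hrange]
    exact ⟨1, by simp [f]⟩
  obtain ⟨h, hh⟩ := hmem
  refine ⟨h, fun x => (Subalgebra.mem_center_iff.mp h.2 x).symm, ?_⟩
  exact (congrArg Subtype.val hh).symm

/-- The centre of the summand `p P` is `ℂ p`. -/
lemma IsMinCentralProjection.exists_smul_eq {p z : P} (hp : IsMinCentralProjection p)
    (hz : ∀ x : P, z * x = x * z) (hzp : z * p = z) : ∃ c : ℂ, z = c • p := by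
  obtain ⟨hp0, hpp, -, hpc, hmin⟩ := hp
  let V := LinearMap.range (LinearMap.mulLeft ℂ p)
  have hV : ∀ v ∈ V, LinearMap.mulLeft ℂ z v ∈ V := by
    rintro _ ⟨x, rfl⟩
    refine ⟨z * x, ?_⟩
    simp only [LinearMap.mulLeft_apply]
    rw [← mul_assoc, ← mul_assoc, hpc z]
  have : Nontrivial V :=
    ⟨⟨⟨p, p, by simpa using hpp⟩, 0, fun h => hp0 (congrArg Subtype.val h)⟩⟩
  obtain ⟨c, hc⟩ := Module.End.exists_eigenvalue ((LinearMap.mulLeft ℂ z).restrict hV)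
  obtain ⟨v, hv⟩ := hc.exists_hasEigenvector
  have hv0 : (v : P) ≠ 0 := fun h => hv.2 (Subtype.ext h)
  have hzv : z * (v : P) = c • (v : P) := congrArg Subtype.val hv.apply_eq_smul
  have hpv : p * (v : P) = v := by
    obtain ⟨x, hx⟩ := v.2
    rw [← hx]
    simp only [LinearMap.mulLeft_apply]
    rw [← mul_assoc, hpp]
  -- `y` is central in `p P` and kills `v`; its support idempotent `e` is `0` or `p`,
  -- and `e = p` is impossible because `e` kills `v`.
  obtain ⟨y, hydef⟩ : ∃ y, y = z - c • p := ⟨_, rfl⟩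
  have hy : ∀ x : P, y * x = x * y := by
    intro x
    rw [hydef, sub_mul, mul_sub, hz x, smul_mul_assoc, mul_smul_comm, hpc x]
  have hyv : y * (v : P) = 0 := by
    rw [hydef, sub_mul, hzv, smul_mul_assoc, hpv, sub_self]
  have hyp : y * p = y := by
    rw [hydef, sub_mul, hzp, smul_mul_assoc, hpp]
  obtain ⟨h, hh, hyh⟩ := exists_central_eq_mul_mul hy
  have hec : ∀ x : P, y * h * x = x * (y * h) := by
    intro x
    rw [mul_assoc, hh x, ← mul_assoc, hy x, mul_assoc]
  have hee : y * h * (y * h) = y * h := by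
    calc y * h * (y * h) = y * (h * y) * h := by noncomm_ring
      _ = (y * y * h) * h := by rw [hh y]; noncomm_ring
      _ = y * h := by rw [← hyh]
  have hev : y * h * (v : P) = 0 := by
    rw [hy h, mul_assoc, hyv, mul_zero]
  have hep : y * h * p = y * h := by
    rw [mul_assoc, hh p, ← mul_assoc, hyp]
  rcases hmin _ hee (star_eq_of_central_idempotent hec hee) hec hep with h0 | h1
  · refine ⟨c, sub_eq_zero.mp ?_⟩
    rw [← hydef, hyh, mul_assoc, h0, mul_zero]
  · rw [h1, hpv] at hev
    exact absurd hev hv0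

end CStar

section Trace

variable {P : Type*} [Ring P] [StarRing P] [Algebra ℂ P] {τ : P →ₗ[ℂ] ℂ}

lemma eq_of_forall_trace_mul_eq (hτfaithful : ∀ x : P, τ (star x * x) = 0 → x = 0)
    {u v : P} (h : ∀ a : P, τ (a * u) = τ (a * v)) : u = v := by
  apply sub_eq_zero.mp
  apply hτfaithful
  rw [mul_sub, map_sub, h, sub_self]

/-- By the dual expansion `x = ∑ i, τ (x * star (l i)) • l i`, left multiplication by `a` is a sum of
rank-one maps `x ↦ τ (a * x * star (l i)) • l i`, whose traces are `τ (a * l i * star (l i))`. -/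
lemma trace_mulLeft_eq [FiniteDimensional ℂ P]
    (hτfaithful : ∀ x : P, τ (star x * x) = 0 → x = 0)
    (hτtracial : ∀ x y : P, τ (x * y) = τ (y * x))
    {n : ℕ} {l : Fin n → P} (hqb : ∀ x : P, x = ∑ i, τ (x * l i) • star (l i)) (a : P) :
    LinearMap.trace ℂ P (LinearMap.mulLeft ℂ a) = τ (a * ∑ i, l i * star (l i)) := by
  have hdual : ∀ x : P, x = ∑ i, τ (x * star (l i)) • l i := by
    intro x
    apply eq_of_forall_trace_mul_eq hτfaithful
    intro y
    conv_lhs => rw [hτtracial, hqb y]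
    simp only [Finset.mul_sum, mul_smul_comm, map_sum, map_smul, smul_eq_mul]
    exact Finset.sum_congr rfl fun i _ => mul_comm _ _
  have hL : LinearMap.mulLeft ℂ a =
      ∑ i, (τ ∘ₗ LinearMap.mulRight ℂ (star (l i)) ∘ₗ LinearMap.mulLeft ℂ a).smulRight (l i) := by
    ext x
    simp only [LinearMap.mulLeft_apply, LinearMap.sum_apply, LinearMap.smulRight_apply,
      LinearMap.comp_apply, LinearMap.mulRight_apply]
    exact hdual (a * x)
  rw [hL, map_sum]
  simp only [LinearMap.trace_smulRight, LinearMap.comp_apply, LinearMap.mulLeft_apply,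
    LinearMap.mulRight_apply, Finset.mul_sum, map_sum, mul_assoc]

end Trace

/-- for any right quasi-basis `(λ_i)` of a faithful tracial state `τ` on a
nonzero finite-dimensional unital C*-algebra `P`, and any minimal central projection `p`
of `P`, one has `(Σ_i λ_i λ_i*)·p = (dim_ℂ(pP)/τ(p))·p`. -/
theorem index_of_tracial_state
    (P : Type*) [NormedRing P] [StarRing P] [CStarRing P]
    [NormedAlgebra ℂ P] [StarModule ℂ P] [Nontrivial P] [FiniteDimensional ℂ P]
    (τ : P →ₗ[ℂ] ℂ) (hτ1 : τ 1 = 1)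
    (hτpos : ∀ x : P, ∃ r : ℝ, 0 ≤ r ∧ τ (star x * x) = (r : ℂ))
    (hτfaithful : ∀ x : P, τ (star x * x) = 0 → x = 0)
    (hτtracial : ∀ x y : P, τ (x * y) = τ (y * x))
    (n : ℕ) (l : Fin n → P)
    (hqb : ∀ x : P, x = ∑ i, τ (x * l i) • star (l i)) :
    ∀ p : P, IsMinCentralProjection p →
      (∑ i, l i * star (l i)) * p =
        (((Module.finrank ℂ ↥(LinearMap.range (LinearMap.mulLeft ℂ p)) : ℕ) : ℂ) / τ p) • p := by
  intro p hp
  set T := ∑ i, l i * star (l i) with hT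
  have htr : ∀ a : P, LinearMap.trace ℂ P (LinearMap.mulLeft ℂ a) = τ (a * T) :=
    trace_mulLeft_eq hτfaithful hτtracial hqb
  have hTc : ∀ b : P, T * b = b * T := by
    intro b
    apply eq_of_forall_trace_mul_eq hτfaithful
    intro a
    calc τ (a * (T * b)) = τ (b * a * T) := by rw [← mul_assoc, hτtracial, mul_assoc]
      _ = τ (a * b * T) := by
        rw [← htr, ← htr, LinearMap.mulLeft_mul, LinearMap.mulLeft_mul]
        exact LinearMap.trace_mul_comm ℂ _ _
      _ = τ (a * (b * T)) := by rw [mul_assoc]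
  obtain ⟨hp0, hpp, hps, hpc, -⟩ := id hp
  obtain ⟨c, hc⟩ := hp.exists_smul_eq (z := T * p)
    (fun x => by rw [mul_assoc, hpc x, ← mul_assoc, hTc x, mul_assoc])
    (by rw [mul_assoc, hpp])
  have hτp : τ p ≠ 0 := fun h => hp0 (hτfaithful p (by rw [hps, hpp, h]))
  have hidem : IsIdempotentElem (LinearMap.mulLeft ℂ p) := by
    change LinearMap.mulLeft ℂ p ∘ₗ LinearMap.mulLeft ℂ p = _
    rw [← LinearMap.mulLeft_mul, hpp]
  have hdim := ((LinearMap.isProj_range_iff_isIdempotentElem _).mpr hidem).trace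
  rw [htr, hτtracial, hc, map_smul, smul_eq_mul] at hdim
  rw [hc, ← hdim, mul_div_cancel_right₀ _ hτp]
end

section
/- Let P be a nonzero finite-dimensional unital C*-algebra, τ a faithful tracial state on P, and (λ_i) a right quasi-basis for τ. Then Σ_i λ_i λ_i* is a scalar multiple of the identity if and only if τ is the Markov trace for the inclusion ℂ ⊆ P with modulus dim_ℂ(P), i.e., τ(p)·dim_ℂ(P) = dim_ℂ(pP) for every minimal central projection p of P; and in that case Σ_i λ_i λ_i* = dim_ℂ(P)·1. -/
/-- `τ` is the Markov trace for the inclusion `ℂ ⊆ P` with modulus `dim_ℂ P`, i.e.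
`τ(p)·dim_ℂ(P) = dim_ℂ(pP)` for every minimal central projection `p` of `P`. -/
def IsMarkovTrace {P : Type*} [NormedRing P] [StarRing P] [NormedAlgebra ℂ P]
    (τ : P →ₗ[ℂ] ℂ) : Prop :=
  ∀ p : P, IsMinCentralProjection p →
    τ p * ((Module.finrank ℂ P : ℕ) : ℂ) =
      ((Module.finrank ℂ ↥(LinearMap.range (LinearMap.mulLeft ℂ p)) : ℕ) : ℂ)

/-- The trace of right multiplication by `a` is `τ(a w)`, where `w = Σ λ_i λ_i*`. -/
lemma trace_mulRight_eq {P : Type*} [Ring P] [StarRing P] [Algebra ℂ P] [FiniteDimensional ℂ P]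
    (τ : P →ₗ[ℂ] ℂ) (hτtracial : ∀ x y : P, τ (x * y) = τ (y * x))
    (n : ℕ) (l : Fin n → P)
    (hqb : ∀ x : P, x = ∑ i, τ (x * l i) • star (l i)) (a : P) :
    LinearMap.trace ℂ P (LinearMap.mulRight ℂ a) = τ (a * ∑ i, l i * star (l i)) := by
  have h : LinearMap.mulRight ℂ a =
      ∑ i, (τ ∘ₗ LinearMap.mulRight ℂ (l i)).smulRight (star (l i) * a) := by
    ext x
    conv_lhs => rw [LinearMap.mulRight_apply, hqb x, Finset.sum_mul]
    simp [LinearMap.sum_apply]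
  rw [h, map_sum, Finset.mul_sum, map_sum]
  refine Finset.sum_congr rfl fun i _ => ?_
  rw [LinearMap.trace_smulRight, LinearMap.comp_apply, LinearMap.mulRight_apply, mul_assoc,
    hτtracial, mul_assoc]

/-- A central idempotent `p` satisfies `dim (pP) = Tr (x ↦ x p)`. -/
lemma finrank_range_eq_trace {P : Type*} [Ring P] [Algebra ℂ P] [FiniteDimensional ℂ P]
    (p : P) (hp : p * p = p) (hc : ∀ x : P, p * x = x * p) :
    ((Module.finrank ℂ ↥(LinearMap.range (LinearMap.mulLeft ℂ p)) : ℕ) : ℂ) =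
      LinearMap.trace ℂ P (LinearMap.mulRight ℂ p) := by
  have h : LinearMap.mulRight ℂ p = LinearMap.mulLeft ℂ p := by
    ext x
    simp [hc x]
  have hi : IsIdempotentElem (LinearMap.mulLeft ℂ p) := by
    ext x
    simp [← mul_assoc, hp]
  rw [h, (LinearMap.IsIdempotentElem.isProj_range _ hi).trace]

lemma finite_spectrum_of_finiteDimensional {P : Type*} [Ring P] [Algebra ℂ P] [Nontrivial P]
    [FiniteDimensional ℂ P] (a : P) : (spectrum ℂ a).Finite := by
  have h0 : minpoly ℂ a ≠ 0 := minpoly.ne_zero (Algebra.IsIntegral.isIntegral a)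
  refine (Polynomial.finite_setOfPred_isRoot h0).subset fun μ hμ => ?_
  have := spectrum.subset_polynomial_aeval a (minpoly ℂ a) ⟨μ, hμ, rfl⟩
  simpa using this

/-- Every nonzero central projection dominates a minimal one, by induction on `dim (qP)`. -/
lemma exists_minCentral_le {P : Type*} [Ring P] [StarRing P] [Algebra ℂ P] [FiniteDimensional ℂ P] :
    ∀ (k : ℕ) (q : P), Module.finrank ℂ ↥(LinearMap.range (LinearMap.mulLeft ℂ q)) = k →
      q ≠ 0 → q * q = q → star q = q → (∀ x : P, q * x = x * q) →
      ∃ p : P, IsMinCentralProjection p ∧ p * q = p := by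
  intro k
  induction k using Nat.strong_induction_on with
  | _ k ih =>
    intro q hk h0 hq hs hc
    by_cases hmin : IsMinCentralProjection q
    · exact ⟨q, hmin, hq⟩
    · obtain ⟨r, hr, hrs, hrc, hrq, hr0, hrne⟩ : ∃ r : P, r * r = r ∧ star r = r ∧
          (∀ x : P, r * x = x * r) ∧ r * q = r ∧ r ≠ 0 ∧ r ≠ q := by
        by_contra hno
        refine hmin ⟨h0, hq, hs, hc, fun r h1 h2 h3 h4 => ?_⟩
        by_contra hor
        rw [not_or] at hor
        exact hno ⟨r, h1, h2, h3, h4, hor.1, hor.2⟩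
      have hlt : LinearMap.range (LinearMap.mulLeft ℂ r) <
          LinearMap.range (LinearMap.mulLeft ℂ q) := by
        refine lt_of_le_not_ge ?_ fun hle => ?_
        · rintro _ ⟨x, rfl⟩
          refine ⟨r * x, ?_⟩
          simp only [LinearMap.mulLeft_apply]
          rw [← mul_assoc, hc r, hrq]
        · -- `q ∈ rP` would force `q = r q = r`
          obtain ⟨x, hx⟩ := hle ⟨1, rfl⟩
          simp only [LinearMap.mulLeft_apply, mul_one] at hx
          refine hrne ?_
          rw [← hrq, ← hx, ← mul_assoc, hr]
      obtain ⟨p, hp, hpr⟩ := ih _ (hk ▸ Submodule.finrank_lt_finrank_of_lt hlt) r rfl hr0 hr hrs hrc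
      exact ⟨p, hp, by rw [← hpr, mul_assoc, hrq]⟩

/-- A nonzero central self-adjoint element acts as a nonzero scalar on some minimal central
projection. -/
lemma exists_minCentral_eigen {P : Type*} [NormedRing P] [StarRing P] [CStarRing P]
    [NormedAlgebra ℂ P] [StarModule ℂ P] [Nontrivial P] [FiniteDimensional ℂ P]
    (z : P) (hz : z ≠ 0) (hs : IsSelfAdjoint z) (hc : ∀ x : P, z * x = x * z) :
    ∃ (c : ℂ) (p : P), c ≠ 0 ∧ IsMinCentralProjection p ∧ p * z = c • p := by
  have : CompleteSpace P := FiniteDimensional.complete ℂ P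
  let : CStarAlgebra P := {}
  have hn : IsStarNormal z := hs.isStarNormal
  have hfin := finite_spectrum_of_finiteDimensional z
  have hcont (f : ℂ → ℂ) : ContinuousOn f (spectrum ℂ z) := hfin.continuousOn f
  obtain ⟨c, hcs, hc0⟩ : ∃ c ∈ spectrum ℂ z, c ≠ 0 := by
    by_contra hno
    push Not at hno
    exact hz (CFC.eq_zero_of_spectrum_subset_zero (R := ℂ) z fun c hc => hno c hc)
  -- the spectral projection of `z` at `c`; the spectrum is finite, so its indicator is continuous
  let f : ℂ → ℂ := fun x => if x = c then 1 else 0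
  have hq0 : cfc f z ≠ 0 := by
    intro h
    rw [← cfc_zero ℂ z] at h
    have := eqOn_of_cfc_eq_cfc h (hcont _) (hcont _) hn hcs
    simp [f] at this
  have hqq : cfc f z * cfc f z = cfc f z := by
    rw [← cfc_mul f f z (hcont _) (hcont _)]
    congr 1
    ext x
    simp [f]
  have hqs : star (cfc f z) = cfc f z := by
    rw [← cfc_star]
    congr 1
    ext x
    by_cases h : x = c <;> simp [f, h]
  have hqc (x : P) : cfc f z * x = x * cfc f z := hs.commute_cfc (hc x) f
  have hqz : cfc f z * z = c • cfc f z := by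
    conv_lhs => rhs; rw [← cfc_id' ℂ z]
    rw [← cfc_mul f _ z (hcont _) (hcont _), ← cfc_const_mul c f z (hcont _)]
    congr 1
    ext x
    by_cases h : x = c <;> simp [f, h]
  obtain ⟨p, hp, hpq⟩ := exists_minCentral_le _ (cfc f z) rfl hq0 hqq hqs hqc
  refine ⟨c, p, hc0, hp, ?_⟩
  rw [← hpq, mul_assoc, hqz, mul_smul_comm]


/-- for a right quasi-basis `(λ_i)` of a faithful tracial state `τ` on a
nonzero finite-dimensional unital C*-algebra `P`, the element `Σ_i λ_i λ_i*` is a scalar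
iff `τ` is the Markov trace for `ℂ ⊆ P` with modulus `dim_ℂ P`; and in that case
`Σ_i λ_i λ_i* = dim_ℂ(P)·1`. -/
theorem scalar_index_iff_Markov_trace
    (P : Type*) [NormedRing P] [StarRing P] [CStarRing P]
    [NormedAlgebra ℂ P] [StarModule ℂ P] [Nontrivial P] [FiniteDimensional ℂ P]
    (τ : P →ₗ[ℂ] ℂ) (hτ1 : τ 1 = 1)
    (hτpos : ∀ x : P, ∃ r : ℝ, 0 ≤ r ∧ τ (star x * x) = (r : ℂ))
    (hτfaithful : ∀ x : P, τ (star x * x) = 0 → x = 0)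
    (hτtracial : ∀ x y : P, τ (x * y) = τ (y * x))
    (n : ℕ) (l : Fin n → P)
    (hqb : ∀ x : P, x = ∑ i, τ (x * l i) • star (l i)) :
    ((∃ c : ℂ, (∑ i, l i * star (l i)) = c • 1) ↔ IsMarkovTrace τ) ∧
    (IsMarkovTrace τ →
      (∑ i, l i * star (l i)) = ((Module.finrank ℂ P : ℕ) : ℂ) • (1 : P)) := by
  have htr := trace_mulRight_eq τ hτtracial n l hqb
  set w := ∑ i, l i * star (l i) with hw
  have hdim : ((Module.finrank ℂ P : ℕ) : ℂ) = τ w := by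
    rw [← one_mul w, ← htr, LinearMap.mulRight_one, LinearMap.trace_id]
  have hnondeg (y : P) (h : ∀ x, τ (x * y) = 0) : y = 0 := hτfaithful y (h _)
  have hwc (a : P) : w * a = a * w := by
    refine sub_eq_zero.mp (hnondeg _ fun x => ?_)
    rw [mul_sub, map_sub, sub_eq_zero, ← mul_assoc, hτtracial, ← mul_assoc, ← mul_assoc,
      ← htr, ← htr, LinearMap.mulRight_mul, LinearMap.mulRight_mul]
    exact LinearMap.trace_mul_comm ℂ _ _
  have hws : IsSelfAdjoint w := by
    simp [IsSelfAdjoint, hw, star_sum]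
  have key : IsMarkovTrace τ → w = ((Module.finrank ℂ P : ℕ) : ℂ) • (1 : P) := by
    intro hM
    by_contra hne
    set d : ℂ := ((Module.finrank ℂ P : ℕ) : ℂ) with hd
    have hds : IsSelfAdjoint (d • (1 : P)) := by
      simp [IsSelfAdjoint, hd]
    obtain ⟨c, p, hc0, hp, hpz⟩ := exists_minCentral_eigen (w - d • (1 : P))
      (sub_ne_zero.mpr hne) (hws.sub hds) (fun x => by simp [sub_mul, mul_sub, hwc x])
    have h1 : τ (p * w) = τ p * d := by
      rw [hM p hp, finrank_range_eq_trace p hp.2.1 hp.2.2.2.1, htr]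
    have h2 : τ (c • p) = 0 := by
      rw [← hpz, mul_sub, map_sub, h1, mul_smul_comm, mul_one, map_smul, smul_eq_mul, mul_comm,
        sub_self]
    rw [map_smul, smul_eq_mul, mul_eq_zero, or_iff_right hc0] at h2
    exact hp.1 (hτfaithful p (by rw [hp.2.2.1, hp.2.1, h2]))
  refine ⟨⟨?_, fun hM => ⟨_, key hM⟩⟩, key⟩
  rintro ⟨c, hc⟩ p hp
  rw [finrank_range_eq_trace p hp.2.1 hp.2.2.2.1, htr, hdim, hc]
  simp [hτ1, mul_comm]
end

section
/- Let B ⊆ A be an inclusion of simple unital C*-algebras with common unit admitting a finite-index conditional expectation, let E₀ : A → B be the minimal conditional expectation, and let C := C*(B ∪ C_A(B)). Then E₀|_C : C → B admits a two-sided orthonormal quasi-basis contained in C_A(B): there exists a finite family (μ_j) in C_A(B) with E₀(μ_i* μ_j) = δ_{ij}·1 for all i, j, and w = Σ_j E₀(w μ_j) μ_j* = Σ_j E₀(w μ_j*) μ_j for every w ∈ C. -/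
/-!
Write `F` for the centralizer of `B`, `φ` for the restriction of `E₀` to `F`, and let `(lᵢ)` be a
quasi-basis of `E₀` with scalar index `r₀`. By simplicity the centres of `B` and of `A` are scalar
(`scalar_of_central`), so `φ` is a faithful state and `τ y = ∑ lᵢ y lᵢ*` is a scalar functional on
`F`.

*Minimality gives `τ = r₀ φ`.* For `y = y*` in `F` and `h = exp (t y / 2)`, the map
`x ↦ φ(h²)⁻¹ E₀ (h x h)` is again a finite-index conditional expectation, with index
`φ(exp (t y)) τ(exp (-t y))` (`perturb`). This is minimal at `t = 0`, so its derivative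
`r₀ φ(y) - τ(y)` vanishes (`index_of_minimal`).

*Hence `E₀ (c x) = E₀ (x c)` for `c` in `F`.* Let `θ` be the linear map of `F` with
`E₀ (c x) = E₀ (x θ(c))`. The functional `τ` satisfies the opposite relation `τ(θ(c) d) = τ(d c)`
(`index_twist`). As `τ` is a nonzero multiple of `φ`, `θ² = 1`; since
`φ(c* θ(c)) = φ(c c*) ≥ 0`, `θ` is also positive for the inner product of `φ`, hence `θ = 1`
(`ce_comm_of_index`).

*Orthonormal families in `F` have at most `r₀` members*, because `∑ μⱼ μⱼ* ≤ ∑ lᵢ lᵢ* = r₀`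
(`bessel_index`) and `φ(μⱼ μⱼ*) = φ(μⱼ* μⱼ) = 1`. A maximal such family is an orthonormal basis
of `F`, and by traciality so is the family of adjoints; this gives both expansions on `F`. They
extend to `C*(B ∪ F)`, the closed span of `B F`, by `B`-linearity and continuity of `E₀`
(`expansion_genC`).
-/

namespace RegularInclusion

variable {A : Type*} [NormedRing A] [StarRing A] [CStarRing A] [CompleteSpace A]
  [NormedAlgebra ℂ A] [StarModule ℂ A]

/-- A conditional expectation of `A` onto the subset `B`: a `ℂ`-linear positive
`B`-bimodular projection of `A` onto `B`. -/
def IsCondExp (B : Set A) (E : A →ₗ[ℂ] A) : Prop :=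
  (∀ x, E x ∈ B) ∧ (∀ b ∈ B, E b = b) ∧
  (∀ x, ∃ y, E (star x * x) = star y * y) ∧
  (∀ b₁ ∈ B, ∀ b₂ ∈ B, ∀ x, E (b₁ * x * b₂) = b₁ * E x * b₂)

/-- `l` is a right quasi-basis for `E`, witnessing finite index. -/
def IsRightQB (E : A →ₗ[ℂ] A) {n : ℕ} (l : Fin n → A) : Prop :=
  ∀ x, x = ∑ i, E (x * l i) * star (l i)

/-- The centralizer (relative commutant) `C_A(B)` of `B` in `A`. -/
def cent (B : Set A) : Set A := {x | ∀ b ∈ B, x * b = b * x}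

/-- The normalizer `N_A(B) = {u ∈ U(A) : uBu* = B}` of `B` in `A`. -/
def normalizer (B : Set A) : Set A :=
  {u | u ∈ unitary A ∧ (fun x => u * x * star u) '' B = B}

/-- The set `U(B)` of unitaries of `B`. -/
def UB (B : Set A) : Set A := {b | b ∈ B ∧ b ∈ unitary A}

/-- The set `U(B)·U(C_A(B))` of products of a unitary of `B` and a unitary of
the centralizer of `B`. -/
def UBC (B : Set A) : Set A :=
  {x | ∃ b c, b ∈ B ∧ b ∈ unitary A ∧ c ∈ cent B ∧ c ∈ unitary A ∧ x = b * c}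

/-- Simplicity of the C*-algebra (given as the subset `S` of `A`): the only closed
two-sided ideals of `S` are `{0}` and `S`. -/
def IsSimpleCStar (S : Set A) : Prop :=
  ∀ I : Set A, I ⊆ S → IsClosed I → (0 : A) ∈ I →
    (∀ x ∈ I, ∀ y ∈ I, x + y ∈ I) →
    (∀ x ∈ I, ∀ b ∈ S, x * b ∈ I ∧ b * x ∈ I) →
    I = {0} ∨ I = S

/-- The intermediate C*-subalgebra `C := C*(B ∪ C_A(B))` generated by `B` and the
centralizer of `B`. -/
def genC (B : Set A) : StarSubalgebra ℂ A :=
  (StarAlgebra.adjoin ℂ (B ∪ cent B)).topologicalClosure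

/-- Regularity of the inclusion `B ⊆ A`: the normalizer of `B` generates `A` as a
C*-algebra. -/
def IsRegular (B : Set A) : Prop :=
  (StarAlgebra.adjoin ℂ (normalizer B)).topologicalClosure = ⊤

/-- `E₀` is the minimal conditional expectation of `A` onto `B`: the finite-index
conditional expectation whose (scalar) Watatani index is least among all finite-index
conditional expectations onto `B`. -/
def IsMinimalCondExp (B : Set A) (E₀ : A →ₗ[ℂ] A) : Prop :=
  IsCondExp B E₀ ∧
  ∃ (r₀ : ℝ) (n : ℕ) (l : Fin n → A), IsRightQB E₀ l ∧
    (∑ i, l i * star (l i)) = (r₀ : ℂ) • 1 ∧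
    ∀ E : A →ₗ[ℂ] A, IsCondExp B E → ∀ (m : ℕ) (μ : Fin m → A), IsRightQB E μ →
      ∀ r : ℝ, (∑ i, μ i * star (μ i)) = (r : ℂ) • 1 → r₀ ≤ r

section Helpers

open scoped ComplexOrder

variable {D : Type*} [CStarAlgebra D]

/-! ### The centralizer and scalars -/

lemma mem_cent_iff {B : StarSubalgebra ℂ D} {c : D} :
    c ∈ cent (B : Set D) ↔ c ∈ StarSubalgebra.centralizer ℂ (B : Set D) := by
  rw [StarSubalgebra.mem_centralizer_iff]
  exact ⟨fun h g hg => ⟨(h g hg).symm, (h _ (star_mem hg)).symm⟩, fun h b hb => (h b hb).1.symm⟩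

/-- A central element of a simple closed subalgebra is a scalar: for `k` in its spectrum, the closed
ideal generated by `z - k` is proper, hence zero. -/
lemma scalar_of_central {S : StarSubalgebra ℂ D} (hS : IsClosed (S : Set D))
    (hsimple : IsSimpleCStar (S : Set D)) {z : D} (hz : z ∈ S) (hc : ∀ b ∈ S, z * b = b * z) :
    ∃ k : ℂ, z = k • 1 := by
  rcases subsingleton_or_nontrivial D with h | h
  · exact ⟨0, Subsingleton.elim _ _⟩
  obtain ⟨k, hk⟩ := spectrum.nonempty z
  set y : D := z - k • 1 with hy
  have hyS : y ∈ S := sub_mem hz (S.smul_mem (one_mem S) k)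
  have hyc : ∀ b ∈ S, y * b = b * y := fun b hb => by
    simp [hy, sub_mul, mul_sub, hc b hb]
  have hyu : ¬ IsUnit y := by
    intro hu
    apply spectrum.mem_iff.1 hk
    rw [Algebra.algebraMap_eq_smul_one, ← neg_sub]
    exact hu.neg
  set J : Set D := (fun s => y * s) '' (S : Set D)
  have key := hsimple (closure J) (closure_minimal (by
      rintro _ ⟨s, hs, rfl⟩; exact mul_mem hyS hs) hS) isClosed_closure
      (subset_closure ⟨0, zero_mem S, by simp⟩)
      (fun x hx w hw => map_mem_closure₂ continuous_add hx hw (by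
        rintro _ ⟨s, hs, rfl⟩ _ ⟨t, ht, rfl⟩
        exact ⟨s + t, add_mem hs ht, by simp [mul_add]⟩))
      (fun x hx b hb => ⟨map_mem_closure (f := fun x => x * b) (by fun_prop) hx (by
          rintro _ ⟨s, hs, rfl⟩
          exact ⟨s * b, mul_mem hs hb, by simp [mul_assoc]⟩),
        map_mem_closure (f := fun x => b * x) (by fun_prop) hx (by
          rintro _ ⟨s, hs, rfl⟩
          exact ⟨b * s, mul_mem hb hs, by simp only [← mul_assoc, hyc b hb]⟩)⟩)
  rcases key with h0 | h1
  · have : y ∈ closure J := subset_closure ⟨1, one_mem S, by simp⟩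
    rw [h0] at this
    exact ⟨k, sub_eq_zero.1 this⟩
  · exfalso
    have h1' : (1 : D) ∈ closure J := by rw [h1]; exact one_mem S
    obtain ⟨_, ⟨s, hs, rfl⟩, hd⟩ := Metric.mem_closure_iff.1 h1' 1 one_pos
    have hu : IsUnit (y * s) := by
      have := isUnit_one_sub_of_norm_lt_one (x := 1 - y * s) (by rwa [dist_eq_norm] at hd)
      simpa using this
    exact hyu ((Commute.isUnit_mul_iff (hyc s hs)).1 hu).1

/-! ### Elementary properties of conditional expectations -/

variable {B : StarSubalgebra ℂ D} {E : D →ₗ[ℂ] D}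

lemma ce_left (hE : IsCondExp (B : Set D) E) {b : D} (hb : b ∈ B) (x : D) :
    E (b * x) = b * E x := by
  simpa using hE.2.2.2 b hb 1 (one_mem B) x

lemma ce_right (hE : IsCondExp (B : Set D) E) {b : D} (hb : b ∈ B) (x : D) :
    E (x * b) = E x * b := by
  simpa using hE.2.2.2 1 (one_mem B) b hb x

lemma ce_one (hE : IsCondExp (B : Set D) E) : E 1 = 1 := hE.2.1 1 (one_mem B)

lemma ce_mem (hE : IsCondExp (B : Set D) E) (x : D) : E x ∈ B := hE.1 x

lemma ce_star (hE : IsCondExp (B : Set D) E) (x : D) : E (star x) = star (E x) := by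
  have hsq : ∀ x, star (E (star x * x)) = E (star x * x) := fun x => by
    obtain ⟨y, hy⟩ := hE.2.2.1 x
    simp [hy]
  -- a self-adjoint element is a difference of squares
  have hsa : ∀ a : D, IsSelfAdjoint a → star (E a) = E a := fun a ha => by
    have h4 : (4 : ℂ) • a = star (a + 1) * (a + 1) - star (a - 1) * (a - 1) := by
      simp only [star_add, star_sub, star_one, ha.star_eq, mul_add, add_mul, mul_sub, sub_mul,
        mul_one, one_mul]
      module
    have h5 : star (E ((4 : ℂ) • a)) = E ((4 : ℂ) • a) := by
      rw [h4, map_sub, star_sub, hsq, hsq]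
    rw [map_smul, star_smul] at h5
    have : star (4 : ℂ) = 4 := by simp
    rw [this] at h5
    exact smul_right_injective D (by norm_num : (4 : ℂ) ≠ 0) h5
  have hx := realPart_add_I_smul_imaginaryPart x
  rw [← hx]
  simp only [star_add, map_add, star_smul, map_smul, (realPart x).2.star_eq,
    (imaginaryPart x).2.star_eq, hsa _ (realPart x).2, hsa _ (imaginaryPart x).2]

lemma left_qb (hE : IsCondExp (B : Set D) E) {n : ℕ} {l : Fin n → D} (hl : IsRightQB E l)
    (x : D) : x = ∑ i, l i * E (star (l i) * x) := by
  have h := congrArg star (hl (star x))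
  simp only [star_star, star_sum, star_mul, ← ce_star hE] at h
  exact h

/-- The expectation is scalar valued on the centralizer, its values being central in `B`. -/
lemma ce_cent_scalar (hE : IsCondExp (B : Set D) E) (hBc : IsClosed (B : Set D))
    (hBs : IsSimpleCStar (B : Set D)) {c : D} (hc : c ∈ cent (B : Set D)) :
    ∃ k : ℂ, E c = k • 1 :=
  scalar_of_central hBc hBs (ce_mem hE c) fun b hb => by
    rw [← ce_left hE hb, ← ce_right hE hb, hc b hb]

/-! ### The twist of the centralizer and the index functional -/

/-- For `y` in the centralizer, `∑ lᵢ y lᵢ*` is central in the whole algebra: expand `x lᵢ` in the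
left quasi-basis, move the coefficients past `y`, and recombine. -/
lemma index_central (hE : IsCondExp (B : Set D) E) {n : ℕ} {l : Fin n → D}
    (hl : IsRightQB E l) {y : D} (hy : y ∈ cent (B : Set D)) (x : D) :
    (∑ i, l i * y * star (l i)) * x = x * ∑ i, l i * y * star (l i) := by
  have h1 : ∀ i, x * (l i * y * star (l i))
      = ∑ j, l j * y * (E (star (l j) * x * l i) * star (l i)) := fun i => by
    have := left_qb hE hl (x * l i)
    calc x * (l i * y * star (l i)) = (x * l i) * (y * star (l i)) := by simp only [mul_assoc]
      _ = ∑ j, l j * E (star (l j) * (x * l i)) * (y * star (l i)) := by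
        conv_lhs => rw [this, Finset.sum_mul]
      _ = _ := by
        refine Finset.sum_congr rfl fun j _ => ?_
        have hc := hy _ (ce_mem hE (star (l j) * x * l i))
        simp only [mul_assoc] at hc ⊢
        rw [← mul_assoc (E _) y, ← hc, mul_assoc]
  rw [Finset.mul_sum, Finset.sum_congr rfl fun i _ => h1 i, Finset.sum_comm, Finset.sum_mul]
  refine Finset.sum_congr rfl fun j _ => ?_
  rw [← Finset.mul_sum, ← hl, mul_assoc]

/-- Watatani's twist: for `c` in the centralizer of `B`, `twist E l c` is the element `θ` with
`E (x θ) = E (c x)` for all `x`. -/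
noncomputable def twist (E : D →ₗ[ℂ] D) {n : ℕ} (l : Fin n → D) (c : D) : D :=
  ∑ i, l i * E (c * star (l i))

lemma twist_spec (hE : IsCondExp (B : Set D) E) {n : ℕ} {l : Fin n → D}
    (hl : IsRightQB E l) {c : D} (hc : c ∈ cent (B : Set D)) (x : D) :
    E (x * twist E l c) = E (c * x) := by
  conv_rhs => rw [hl x]
  simp only [twist, Finset.mul_sum, map_sum]
  refine Finset.sum_congr rfl fun i _ => ?_
  rw [← mul_assoc, ce_right hE (ce_mem hE _), ← ce_left hE (ce_mem hE _), ← mul_assoc, ← mul_assoc,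
    hc _ (ce_mem hE _)]

lemma eq_zero_of_ce (hE : IsCondExp (B : Set D) E) {n : ℕ} {l : Fin n → D}
    (hl : IsRightQB E l) {z : D} (hz : ∀ x, E (x * z) = 0) : z = 0 := by
  rw [left_qb hE hl z]
  simp [hz]

lemma twist_mem (hE : IsCondExp (B : Set D) E) {n : ℕ} {l : Fin n → D}
    (hl : IsRightQB E l) {c : D} (hc : c ∈ cent (B : Set D)) :
    twist E l c ∈ cent (B : Set D) := fun b hb => by
  rw [← sub_eq_zero]
  refine eq_zero_of_ce hE hl fun x => ?_
  rw [mul_sub, map_sub, ← mul_assoc, ← mul_assoc, ce_right hE hb, twist_spec hE hl hc,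
    twist_spec hE hl hc, ← mul_assoc, ce_right hE hb, sub_self]

/-- The index functional `y ↦ ∑ lᵢ y lᵢ*` is twisted in the direction opposite to that
of the expectation. -/
lemma index_twist (hE : IsCondExp (B : Set D) E) {n : ℕ} {l : Fin n → D}
    (hl : IsRightQB E l) {c d : D} (hc : c ∈ cent (B : Set D)) (hd : d ∈ cent (B : Set D)) :
    ∑ i, l i * (twist E l c * d) * star (l i) = ∑ i, l i * (d * c) * star (l i) := by
  have h1 : ∀ i, l i * (twist E l c * d) * star (l i)
      = ∑ j, l j * d * (E (c * star (l j) * l i) * star (l i)) := fun i => by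
    calc l i * (twist E l c * d) * star (l i)
        = (l i * twist E l c) * (d * star (l i)) := by simp only [mul_assoc]
      _ = ∑ j, l j * E (star (l j) * (l i * twist E l c)) * (d * star (l i)) := by
        conv_lhs => rw [left_qb hE hl (l i * twist E l c), Finset.sum_mul]
      _ = _ := by
        refine Finset.sum_congr rfl fun j _ => ?_
        rw [← mul_assoc (star (l j)), twist_spec hE hl hc, ← mul_assoc c]
        have := hd _ (ce_mem hE (c * star (l j) * l i))
        simp only [mul_assoc] at this ⊢
        rw [← mul_assoc (E _) d, ← this, mul_assoc]
  rw [Finset.sum_congr rfl fun i _ => h1 i, Finset.sum_comm]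
  refine Finset.sum_congr rfl fun j _ => ?_
  rw [← Finset.mul_sum, ← hl]
  simp only [mul_assoc]

/-! ### Perturbations of a conditional expectation -/

lemma scalar_real [Nontrivial D] {k : ℂ} (h : IsSelfAdjoint (k • (1 : D))) :
    k = (k.re : ℂ) := by
  have h1 := h.star_eq
  rw [star_smul, star_one] at h1
  have h2 := smul_left_injective ℂ (one_ne_zero (α := D)) h1
  exact (Complex.conj_eq_iff_re.1 h2).symm

/-- The perturbation `x ↦ s⁻¹ E (h x h)` of `E` by an invertible self-adjoint `h` of the
centralizer with `E (h h) = s`; its index is `s ∑ lᵢ h⁻² lᵢ*`. -/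
lemma perturb (hE : IsCondExp (B : Set D) E) {n : ℕ} {l : Fin n → D} (hl : IsRightQB E l)
    {h g : D} (hh : h ∈ cent (B : Set D)) (hsa : star h = h) (hgs : star g = g)
    (hgh : g * h = 1) (hhg : h * g = 1) {s : ℝ} (hs : 0 < s) (hsE : E (h * h) = (s : ℂ) • 1) :
    ∃ (E' : D →ₗ[ℂ] D) (m : Fin n → D), IsCondExp (B : Set D) E' ∧ IsRightQB E' m ∧
      ∑ i, m i * star (m i) = (s : ℂ) • ∑ i, l i * (g * g) * star (l i) := by
  have hs0 : (s : ℂ) ≠ 0 := by exact_mod_cast hs.ne'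
  have hsq : (Real.sqrt s : ℂ) * (Real.sqrt s : ℂ) = s := by
    exact_mod_cast Real.mul_self_sqrt hs.le
  have hsqi : ((Real.sqrt s)⁻¹ : ℂ) * ((Real.sqrt s)⁻¹ : ℂ) = (s : ℂ)⁻¹ := by
    rw [← mul_inv, hsq]
  have hgc : ∀ b ∈ B, g * b = b * g := fun b hb => by
    calc g * b = g * (b * (h * g)) := by rw [hhg, mul_one]
      _ = g * (b * h) * g := by simp only [mul_assoc]
      _ = g * (h * b) * g := by rw [hh b hb]
      _ = b * g := by rw [← mul_assoc, hgh, one_mul]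
  let E' : D →ₗ[ℂ] D :=
    (s : ℂ)⁻¹ • (E ∘ₗ LinearMap.mulLeft ℂ h ∘ₗ LinearMap.mulRight ℂ h)
  have hE' : ∀ x, E' x = (s : ℂ)⁻¹ • E (h * (x * h)) := fun x => rfl
  have hbi : ∀ b₁ ∈ B, ∀ b₂ ∈ B, ∀ x, E' (b₁ * x * b₂) = b₁ * E' x * b₂ := by
    intro b₁ hb₁ b₂ hb₂ x
    have : h * (b₁ * x * b₂ * h) = b₁ * (h * (x * h)) * b₂ := by
      rw [mul_assoc _ b₂, ← hh b₂ hb₂]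
      simp only [← mul_assoc]
      rw [hh b₁ hb₁]
    rw [hE', hE', this, hE.2.2.2 b₁ hb₁ b₂ hb₂]
    simp only [mul_smul_comm, smul_mul_assoc]
  refine ⟨E', fun i => (Real.sqrt s : ℂ) • (l i * g), ⟨fun x => ?_, fun b hb => ?_, fun x => ?_,
    hbi⟩, fun x => ?_, ?_⟩
  · exact B.smul_mem (ce_mem hE _) _
  · have h1 : E' 1 = 1 := by rw [hE', one_mul, hsE, smul_smul, inv_mul_cancel₀ hs0, one_smul]
    simpa [h1] using hbi b hb 1 (one_mem B) 1
  · obtain ⟨y, hy⟩ := hE.2.2.1 (x * h)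
    refine ⟨((Real.sqrt s)⁻¹ : ℂ) • y, ?_⟩
    have : h * (star x * x * h) = star (x * h) * (x * h) := by
      rw [star_mul, hsa]; simp only [mul_assoc]
    have hst : star ((Real.sqrt s)⁻¹ : ℂ) = ((Real.sqrt s)⁻¹ : ℂ) := by simp
    rw [hE', this, hy, star_smul, smul_mul_smul_comm, hst, hsqi]
  · have h1 := congrArg (g * ·) (hl (h * x))
    simp only [← mul_assoc, hgh, one_mul, Finset.mul_sum] at h1
    refine h1.trans (Finset.sum_congr rfl fun i _ => ?_)
    have hst : star (Real.sqrt s : ℂ) = (Real.sqrt s : ℂ) := by simp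
    rw [hE', hgc _ (ce_mem hE _), star_smul, hst, star_mul, hgs]
    simp only [mul_smul_comm, smul_mul_assoc, map_smul, smul_smul]
    rw [show (Real.sqrt s : ℂ) * ((s : ℂ)⁻¹ * (Real.sqrt s : ℂ)) = 1 by
      rw [mul_left_comm, hsq, inv_mul_cancel₀ hs0], one_smul]
    simp only [mul_assoc, hgh, mul_one]
  · rw [Finset.smul_sum]
    refine Finset.sum_congr rfl fun i _ => ?_
    have hst : star (Real.sqrt s : ℂ) = (Real.sqrt s : ℂ) := by simp
    rw [star_smul, hst, smul_mul_smul_comm, hsq, star_mul, hgs]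
    simp only [mul_assoc]

/-! ### Orthonormal families and products of `B` with the centralizer -/

/-- Bessel's inequality at the level of the index: with `mᵢ = lᵢ - ∑ⱼ μⱼ E (μⱼ* lᵢ)` one has
`∑ lᵢ lᵢ* - ∑ μⱼ μⱼ* = ∑ mᵢ mᵢ*`. -/
lemma bessel_index (hE : IsCondExp (B : Set D) E) {n : ℕ} {l : Fin n → D} (hl : IsRightQB E l)
    {k : ℕ} {μ : Fin k → D}
    (hμ : ∀ i j, E (star (μ i) * μ j) = if i = j then (1 : D) else 0) :
    ∃ m : Fin n → D, ∑ i, l i * star (l i) - ∑ j, μ j * star (μ j) = ∑ i, m i * star (m i) := by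
  refine ⟨fun i => l i - ∑ j, μ j * E (star (μ j) * l i), ?_⟩
  have hs : ∀ i j, star (E (star (μ j) * l i)) = E (star (l i) * μ j) := fun i j => by
    rw [← ce_star hE]; simp
  have h1 : ∑ i, (∑ j, μ j * E (star (μ j) * l i)) * star (l i) = ∑ j, μ j * star (μ j) := by
    simp only [Finset.sum_mul]
    rw [Finset.sum_comm]
    refine Finset.sum_congr rfl fun j _ => ?_
    conv_rhs => rw [hl (star (μ j)), Finset.mul_sum]
    simp only [mul_assoc]
  have h2 : ∑ i, l i * star (∑ j, μ j * E (star (μ j) * l i)) = ∑ j, μ j * star (μ j) := by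
    have := congrArg star h1
    simpa [star_sum] using this
  have h3 : ∑ i, (∑ j, μ j * E (star (μ j) * l i)) * star (∑ j, μ j * E (star (μ j) * l i))
      = ∑ j, μ j * star (μ j) := by
    have hE' : ∀ j k, ∑ i, E (star (μ j) * l i) * E (star (l i) * μ k)
        = if j = k then (1 : D) else 0 := fun j k => by
      rw [← hμ j k]
      conv_rhs => rw [left_qb hE hl (μ k), Finset.mul_sum, map_sum]
      refine Finset.sum_congr rfl fun i _ => ?_
      rw [← mul_assoc, ce_right hE (ce_mem hE _)]
    calc _ = ∑ i, ∑ j, ∑ k, μ j * (E (star (μ j) * l i) * E (star (l i) * μ k)) * star (μ k) := by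
          refine Finset.sum_congr rfl fun i _ => ?_
          rw [star_sum, Finset.sum_mul_sum]
          refine Finset.sum_congr rfl fun j _ => Finset.sum_congr rfl fun k _ => ?_
          rw [star_mul, hs]
          simp only [mul_assoc]
      _ = ∑ j, ∑ k, μ j * (∑ i, E (star (μ j) * l i) * E (star (l i) * μ k)) * star (μ k) := by
          rw [Finset.sum_comm]
          refine Finset.sum_congr rfl fun j _ => ?_
          rw [Finset.sum_comm]
          simp only [Finset.mul_sum, Finset.sum_mul]
      _ = _ := by simp [hE']
  simp only [star_sub, sub_mul, mul_sub, Finset.sum_sub_distrib]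
  rw [h1, h2, h3]
  simp

/-- The algebra `genC B` lies in the closed span of the products of an element of `B` and an element
of the centralizer. -/
lemma genC_subset : (genC (B : Set D) : Set D) ⊆
    closure (Submodule.span ℂ {w | ∃ b ∈ B, ∃ c ∈ cent (B : Set D), w = b * c} : Set D) := by
  refine closure_mono fun w hw => ?_
  have hmul : ∀ {a b : D}, a ∈ cent (B : Set D) → b ∈ cent (B : Set D) →
      a * b ∈ cent (B : Set D) := fun ha hb => by
    rw [mem_cent_iff] at *; exact mul_mem ha hb
  have hone : (1 : D) ∈ cent (B : Set D) := fun b _ => by simp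
  induction hw using StarAlgebra.adjoin_induction with
  | mem x hx =>
    refine Submodule.subset_span ?_
    rcases hx with hx | hx
    · exact ⟨x, hx, 1, hone, by simp⟩
    · exact ⟨1, one_mem B, x, hx, by simp⟩
  | algebraMap r =>
    rw [Algebra.algebraMap_eq_smul_one]
    exact Submodule.smul_mem _ _ (Submodule.subset_span ⟨1, one_mem B, 1, hone, by simp⟩)
  | add x y _ _ hx hy => exact add_mem hx hy
  | mul x y _ _ hx hy =>
    have hxy := Submodule.mul_mem_mul hx hy
    rw [Submodule.span_mul_span] at hxy
    refine Submodule.span_mono ?_ hxy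
    rintro _ ⟨_, ⟨b, hb, c, hc, rfl⟩, _, ⟨b', hb', c', hc', rfl⟩, rfl⟩
    refine ⟨b * b', mul_mem hb hb', c * c', hmul hc hc', ?_⟩
    simp only [mul_assoc]
    rw [← mul_assoc c b', hc b' hb', mul_assoc]
  | star x hx' hx =>
    clear hx'
    induction hx using Submodule.span_induction with
    | mem x hx =>
      obtain ⟨b, hb, c, hc, rfl⟩ := hx
      refine Submodule.subset_span ⟨star b, star_mem hb, star c, ?_, ?_⟩
      · rw [mem_cent_iff] at *; exact star_mem hc
      · rw [← star_mul, hc b hb]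
    | zero => simp
    | add x y _ _ hx hy => rw [star_add]; exact add_mem hx hy
    | smul a x _ hx => rw [star_smul]; exact Submodule.smul_mem _ _ hx

/-! ### Positivity -/

variable [PartialOrder D] [StarOrderedRing D]

lemma ce_nonneg (hE : IsCondExp (B : Set D) E) (x : D) : 0 ≤ E (star x * x) := by
  obtain ⟨y, hy⟩ := hE.2.2.1 x
  rw [hy]
  exact star_mul_self_nonneg y

lemma ce_continuous (hE : IsCondExp (B : Set D) E) : Continuous E := by
  have h : ∀ x, 0 ≤ x → 0 ≤ E x := fun x hx => by
    obtain ⟨y, rfl⟩ := CStarAlgebra.nonneg_iff_eq_star_mul_self.1 hx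
    exact ce_nonneg hE y
  exact map_continuous (PositiveLinearMap.mk₀ E h)

/-- Faithfulness of a finite-index expectation. For `e = E (lᵢ* x)` and `t > 0`, expanding
`0 ≤ E ((x - t lᵢ e)* (x - t lᵢ e))` gives `2 e* e ≤ t e* E(lᵢ* lᵢ) e`. -/
lemma ce_faithful (hE : IsCondExp (B : Set D) E) {n : ℕ} {l : Fin n → D} (hl : IsRightQB E l)
    {x : D} (hx : E (star x * x) = 0) : x = 0 := by
  rw [left_qb hE hl x]
  refine Finset.sum_eq_zero fun i _ => ?_
  set e := E (star (l i) * x) with he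
  have hemem : e ∈ B := ce_mem hE _
  have hes : star e = E (star x * l i) := by rw [he, ← ce_star hE]; simp
  set K := star e * E (star (l i) * l i) * e with hK
  have hbound : ∀ t : ℝ, 0 < t → 2 * ‖e‖ ^ 2 ≤ t * ‖K‖ := fun t ht => by
    have h0 := ce_nonneg hE (x - (t : ℂ) • (l i * e))
    have h1 : E (star (x - (t : ℂ) • (l i * e)) * (x - (t : ℂ) • (l i * e)))
        = (t : ℂ) • ((t : ℂ) • K - (2 : ℂ) • (star e * e)) := by
      have e1 : E (star x * (l i * e)) = star e * e := by
        rw [← mul_assoc, ce_right hE hemem, hes]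
      have e2 : E (star e * (star (l i) * x)) = star e * e := by
        rw [ce_left hE (star_mem hemem)]
      have e3 : E (star e * (star (l i) * (l i * e))) = K := by
        rw [ce_left hE (star_mem hemem), ← mul_assoc (star (l i)), ce_right hE hemem, hK,
          mul_assoc]
      have hts : star (t : ℂ) = t := by simp
      simp only [star_sub, star_smul, star_mul, sub_mul, mul_sub, smul_mul_assoc, mul_smul_comm,
        map_sub, map_smul, hx, hts, mul_assoc, e1, e2, e3]
      module
    rw [h1] at h0
    have h2 : 0 ≤ (t : ℂ) • K - (2 : ℂ) • (star e * e) := by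
      have hti : (0 : ℂ) ≤ ((t⁻¹ : ℝ) : ℂ) := by exact_mod_cast (inv_pos.2 ht).le
      have h3 := smul_nonneg hti h0
      rwa [smul_smul, ← Complex.ofReal_mul, inv_mul_cancel₀ ht.ne', Complex.ofReal_one,
        one_smul] at h3
    have h4 := CStarAlgebra.norm_le_norm_of_nonneg_of_le
      (smul_nonneg (by norm_num : (0 : ℂ) ≤ 2) (star_mul_self_nonneg e)) (sub_nonneg.1 h2)
    rw [norm_smul, norm_smul, CStarRing.norm_star_mul_self] at h4
    simp only [Complex.norm_ofNat, Complex.norm_real, Real.norm_eq_abs, abs_of_pos ht] at h4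
    rw [pow_two]
    exact h4
  have hz : e = 0 := by
    by_contra hne
    have hp : 0 < ‖e‖ ^ 2 := by positivity
    have h5 := hbound (‖e‖ ^ 2 / (‖K‖ + 1)) (by positivity)
    have h6 : ‖e‖ ^ 2 / (‖K‖ + 1) * ‖K‖ ≤ ‖e‖ ^ 2 := by
      rw [div_mul_eq_mul_div, div_le_iff₀ (by positivity)]
      nlinarith
    linarith
  rw [hz, mul_zero]

lemma real_scalar_nonneg [Nontrivial D] {r : ℝ} (h : (0 : D) ≤ (r : ℂ) • 1) : 0 ≤ r := by
  by_contra! hr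
  have h1 : (0 : D) ≤ ((-r : ℝ) : ℂ) • (1 : D) :=
    smul_nonneg (by exact_mod_cast (neg_pos.2 hr).le) zero_le_one
  have h2 : ((r : ℝ) : ℂ) • (1 : D) = 0 := by
    refine le_antisymm ?_ h
    rw [Complex.ofReal_neg, neg_smul] at h1
    exact neg_nonneg.1 h1
  rcases smul_eq_zero.1 h2 with h3 | h3
  · exact hr.ne (by exact_mod_cast h3)
  · exact one_ne_zero h3

/-- On nonzero elements of the centralizer the form `E (c* c)` is a positive real. -/
lemma ce_cent_pos [Nontrivial D] (hE : IsCondExp (B : Set D) E) (hBc : IsClosed (B : Set D))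
    (hBs : IsSimpleCStar (B : Set D)) {n : ℕ} {l : Fin n → D} (hl : IsRightQB E l)
    {c : D} (hc : c ∈ cent (B : Set D)) (h0 : c ≠ 0) :
    ∃ s : ℝ, 0 < s ∧ E (star c * c) = (s : ℂ) • 1 := by
  have hcc : star c * c ∈ cent (B : Set D) := by
    rw [mem_cent_iff] at hc ⊢
    exact mul_mem (star_mem hc) hc
  obtain ⟨k, hk⟩ := ce_cent_scalar hE hBc hBs hcc
  have hpos := ce_nonneg hE c
  have hsa : IsSelfAdjoint (k • (1 : D)) := by rw [← hk]; exact .of_nonneg hpos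
  have hkr := scalar_real hsa
  rw [hk, hkr] at hpos
  refine ⟨k.re, lt_of_le_of_ne (real_scalar_nonneg hpos) fun h => h0 ?_, by rw [hk, ← hkr]⟩
  refine ce_faithful hE hl ?_
  rw [hk, hkr, ← h]
  simp

/-! ### Minimality makes the expectation central on the centralizer -/

/-- If the index functional is proportional to `E` on the centralizer, then the twist, being a
positive involution there, is trivial. -/
lemma ce_comm_of_index (hE : IsCondExp (B : Set D) E) {n : ℕ} {l : Fin n → D}
    (hl : IsRightQB E l) {r : ℂ} (hr : r ≠ 0)
    (hT : ∀ c ∈ cent (B : Set D), ∑ i, l i * c * star (l i) = r • E c)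
    {c : D} (hc : c ∈ cent (B : Set D)) (x : D) : E (x * c) = E (c * x) := by
  have hmul : ∀ {a b : D}, a ∈ cent (B : Set D) → b ∈ cent (B : Set D) →
      a * b ∈ cent (B : Set D) := fun ha hb => by
    rw [mem_cent_iff] at *; exact mul_mem ha hb
  have hsub : ∀ {a b : D}, a ∈ cent (B : Set D) → b ∈ cent (B : Set D) →
      a - b ∈ cent (B : Set D) := fun ha hb => by
    rw [mem_cent_iff] at *; exact sub_mem ha hb
  have hstar : ∀ {a : D}, a ∈ cent (B : Set D) → star a ∈ cent (B : Set D) := fun ha => by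
    rw [mem_cent_iff] at *; exact star_mem ha
  have htw := twist_mem hE hl hc
  have htw2 := twist_mem hE hl htw
  have hflip : ∀ d ∈ cent (B : Set D), E (twist E l c * d) = E (d * c) := fun d hd => by
    have h := index_twist hE hl hc hd
    rw [hT _ (hmul htw hd), hT _ (hmul hd hc)] at h
    exact smul_right_injective D hr h
  have hinv : twist E l (twist E l c) = c := by
    rw [← sub_eq_zero]
    refine ce_faithful hE hl ?_
    set z := twist E l (twist E l c) - c with hz
    have hzm : z ∈ cent (B : Set D) := hsub htw2 hc
    conv_lhs => rw [hz, mul_sub, map_sub, ← hz]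
    rw [twist_spec hE hl htw, hflip _ (hstar hzm), sub_self]
  set p := c - twist E l c with hp
  have hpm : p ∈ cent (B : Set D) := hsub hc htw
  have htp : twist E l p = -p := by
    have : twist E l p = twist E l c - twist E l (twist E l c) := by
      simp only [twist, hp, sub_mul, map_sub, mul_sub, Finset.sum_sub_distrib]
    rw [this, hinv, hp, neg_sub]
  have h1 := twist_spec hE hl hpm (star p)
  rw [htp, mul_neg, map_neg] at h1
  have h2 : 0 ≤ -E (star p * p) := by
    rw [h1]
    simpa using ce_nonneg hE (star p)
  have hp0 : p = 0 := ce_faithful hE hl (le_antisymm (neg_nonneg.1 h2) (ce_nonneg hE p))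
  have hid : twist E l c = c := (sub_eq_zero.1 hp0).symm
  conv_lhs => rw [← hid]
  exact twist_spec hE hl hc x

/-- Stationarity of the index at a minimal expectation: along `k = exp (t y)` the index
`E (k) ∑ lᵢ k⁻¹ lᵢ*` of the perturbed expectation is least at `t = 0`, and its derivative there is
`r₀ E (y) - ∑ lᵢ y lᵢ*`. -/
lemma index_of_minimal_sa [Nontrivial D] (hE : IsCondExp (B : Set D) E)
    (hBc : IsClosed (B : Set D)) (hBs : IsSimpleCStar (B : Set D))
    (hDs : IsSimpleCStar (Set.univ : Set D)) {n : ℕ} {l : Fin n → D} (hl : IsRightQB E l)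
    {r₀ : ℝ} (hr₀ : ∑ i, l i * star (l i) = (r₀ : ℂ) • 1)
    (hmin : ∀ E' : D →ₗ[ℂ] D, IsCondExp (B : Set D) E' → ∀ (m : ℕ) (μ : Fin m → D),
      IsRightQB E' μ → ∀ r : ℝ, (∑ i, μ i * star (μ i)) = (r : ℂ) • 1 → r₀ ≤ r)
    {y : D} (hy : y ∈ cent (B : Set D)) (hys : IsSelfAdjoint y) :
    ∑ i, l i * y * star (l i) = (r₀ : ℂ) • E y := by
  have hTs : ∀ c ∈ cent (B : Set D), ∃ k : ℂ, ∑ i, l i * c * star (l i) = k • 1 := fun c hc =>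
    scalar_of_central (S := ⊤) (by simp) (by simpa using hDs) StarSubalgebra.mem_top
      fun b _ => index_central hE hl hc b
  let T : D →L[ℂ] D := ∑ i, (ContinuousLinearMap.mul ℂ D (l i)).comp
    ((ContinuousLinearMap.mul ℂ D).flip (star (l i)))
  have hT : ∀ c, T c = ∑ i, l i * c * star (l i) := fun c => by
    simp [T, mul_assoc]
  let Ec : D →L[ℂ] D := ⟨E, ce_continuous hE⟩
  have hEc : ∀ c, Ec c = E c := fun c => rfl
  have hexp : ∀ t : ℝ, NormedSpace.exp (t • y) ∈ cent (B : Set D) := fun t b hb => by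
    have : Commute b (t • y) := Commute.smul_right (hy b hb).symm t
    exact this.exp_right.symm
  have hexps : ∀ t : ℝ, star (NormedSpace.exp (t • y)) = NormedSpace.exp (t • y) := fun t => by
    rw [NormedSpace.star_exp, star_smul, hys.star_eq, star_trivial]
  have hmulexp : ∀ s t : ℝ, NormedSpace.exp (s • y) * NormedSpace.exp (t • y)
      = NormedSpace.exp ((s + t) • y) := fun s t => by
    let _ : NormedAlgebra ℚ D := NormedAlgebra.restrictScalars ℚ ℂ D
    rw [add_smul, NormedSpace.exp_add_of_commute]
    exact (Commute.refl y).smul_left s |>.smul_right t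
  obtain ⟨ψ, -, hψ⟩ := exists_dual_vector' ℂ (1 : D)
  have hψ1 : ψ 1 = 1 := by simpa using hψ
  let f : ℝ → D := fun t => Ec (NormedSpace.exp (t • y)) * T (NormedSpace.exp ((-t) • y))
  have hf0 : f 0 = (r₀ : ℂ) • 1 := by
    simp [f, hEc, ce_one hE, hT, hr₀]
  have hle : ∀ t, r₀ ≤ (ψ (f t)).re := fun t => by
    have hne : NormedSpace.exp ((t / 2) • y) ≠ 0 := fun h0 => by
      have := hmulexp (t / 2) (-(t / 2))
      rw [h0] at this
      simp at this
    obtain ⟨s, hs, hsE⟩ := ce_cent_pos hE hBc hBs hl (hexp (t / 2)) hne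
    rw [hexps] at hsE
    obtain ⟨E', m, hE', hm, hind⟩ := perturb hE hl (h := NormedSpace.exp ((t / 2) • y))
      (g := NormedSpace.exp ((-(t / 2)) • y)) (hexp _) (hexps _) (hexps _)
      (by rw [hmulexp]; simp) (by rw [hmulexp]; simp) hs hsE
    rw [hmulexp, add_halves] at hsE
    rw [hmulexp, ← neg_add, add_halves] at hind
    obtain ⟨k, hk⟩ := hTs _ (hexp (-t))
    rw [hk, smul_smul] at hind
    have hsa : IsSelfAdjoint (((s : ℂ) * k) • (1 : D)) := by
      rw [← hind]
      simp [IsSelfAdjoint, star_sum]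
    have hft : f t = ((s : ℂ) * k) • 1 := by
      simp only [f]
      rw [hEc, hsE, hT, hk, smul_mul_smul_comm, one_mul]
    rw [hft, map_smul, hψ1, smul_eq_mul, mul_one]
    exact hmin E' hE' n m hm _ (by rw [hind, ← scalar_real hsa])
  have hd : HasDerivAt f (E y * T 1 - T y) 0 := by
    have h1 : HasDerivAt (fun t : ℝ => NormedSpace.exp (t • y)) y 0 := by
      simpa using hasDerivAt_exp_smul_const (𝕂 := ℝ) y 0
    have h2 : HasDerivAt (fun t : ℝ => NormedSpace.exp ((-t) • y)) (-y) 0 := by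
      simpa using hasDerivAt_exp_smul_const (𝕂 := ℝ) (-y) 0
    have h3 := (Ec.restrictScalars ℝ).hasFDerivAt.comp_hasDerivAt (0 : ℝ) h1
    have h4 := (T.restrictScalars ℝ).hasFDerivAt.comp_hasDerivAt (0 : ℝ) h2
    have h5 := h3.mul h4
    have h6 : E y * T 1 - T y = Ec y * T (NormedSpace.exp ((-0 : ℝ) • y))
        + Ec (NormedSpace.exp ((0 : ℝ) • y)) * T (-y) := by
      simp [hEc, ce_one hE, sub_eq_add_neg]
    rw [h6]
    exact h5
  have hd' : HasDerivAt (fun t => (ψ (f t)).re) (ψ (E y * T 1 - T y)).re 0 :=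
    (Complex.reCLM.comp (ψ.restrictScalars ℝ)).hasFDerivAt.comp_hasDerivAt (0 : ℝ) hd
  have hmin0 : IsLocalMin (fun t => (ψ (f t)).re) 0 := Filter.Eventually.of_forall fun t => by
    simpa [hf0, hψ1] using hle t
  have hz := hmin0.hasDerivAt_eq_zero hd'
  obtain ⟨k, hk⟩ := hTs _ hy
  obtain ⟨e, he⟩ := ce_cent_scalar hE hBc hBs hy
  have hT1 : T 1 = (r₀ : ℂ) • 1 := by simp [hT, hr₀]
  have hkr : k = (k.re : ℂ) := scalar_real (D := D) (by
    rw [← hk]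
    simp [IsSelfAdjoint, star_sum, hys.star_eq, mul_assoc])
  have her : e = (e.re : ℂ) := scalar_real (D := D) (by
    rw [← he, IsSelfAdjoint, ← ce_star hE, hys.star_eq])
  rw [hT1, hT, hk, he, smul_mul_smul_comm, one_mul, ← sub_smul, map_smul, hψ1, smul_eq_mul,
    mul_one, hkr, her, ← Complex.ofReal_mul, ← Complex.ofReal_sub, Complex.ofReal_re] at hz
  rw [hk, he, smul_smul, hkr, her, ← Complex.ofReal_mul]
  congr 2
  linarith

lemma index_of_minimal [Nontrivial D] (hE : IsCondExp (B : Set D) E)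
    (hBc : IsClosed (B : Set D)) (hBs : IsSimpleCStar (B : Set D))
    (hDs : IsSimpleCStar (Set.univ : Set D)) {n : ℕ} {l : Fin n → D} (hl : IsRightQB E l)
    {r₀ : ℝ} (hr₀ : ∑ i, l i * star (l i) = (r₀ : ℂ) • 1)
    (hmin : ∀ E' : D →ₗ[ℂ] D, IsCondExp (B : Set D) E' → ∀ (m : ℕ) (μ : Fin m → D),
      IsRightQB E' μ → ∀ r : ℝ, (∑ i, μ i * star (μ i)) = (r : ℂ) • 1 → r₀ ≤ r)
    {y : D} (hy : y ∈ cent (B : Set D)) :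
    ∑ i, l i * y * star (l i) = (r₀ : ℂ) • E y := by
  have hys : star y ∈ cent (B : Set D) := by rw [mem_cent_iff] at *; exact star_mem hy
  -- `2 y = a - i b` with `a`, `b` self-adjoint
  have ha := index_of_minimal_sa hE hBc hBs hDs hl hr₀ hmin (y := y + star y)
    (by rw [mem_cent_iff] at *; exact add_mem hy hys) (by simp [IsSelfAdjoint, add_comm])
  have hb := index_of_minimal_sa hE hBc hBs hDs hl hr₀ hmin (y := Complex.I • (y - star y))
    (by rw [mem_cent_iff] at *; exact StarSubalgebra.smul_mem _ (sub_mem hy hys) _)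
    (by simp [IsSelfAdjoint, star_smul, smul_sub, neg_add_eq_sub])
  have hdec : y = (1 / 2 : ℂ) • (y + star y)
      + (-Complex.I / 2 : ℂ) • (Complex.I • (y - star y)) := by
    rw [smul_smul, show -Complex.I / 2 * Complex.I = 1 / 2 by
      rw [div_mul_eq_mul_div, neg_mul, Complex.I_mul_I, neg_neg]]
    module
  have hlin : ∑ i, l i * y * star (l i)
      = (1 / 2 : ℂ) • ∑ i, l i * (y + star y) * star (l i)
      + (-Complex.I / 2 : ℂ) • ∑ i, l i * (Complex.I • (y - star y)) * star (l i) := by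
    rw [Finset.smul_sum, Finset.smul_sum, ← Finset.sum_add_distrib]
    refine Finset.sum_congr rfl fun i _ => ?_
    conv_lhs => rw [hdec]
    simp only [mul_add, add_mul, mul_smul_comm, smul_mul_assoc, smul_add]
  rw [hlin, ha, hb]
  conv_rhs => rw [hdec]
  rw [E.map_add ((1 / 2 : ℂ) • _), map_smul E (1 / 2 : ℂ), map_smul E (-Complex.I / 2 : ℂ),
    smul_add (r₀ : ℂ), smul_comm (r₀ : ℂ), smul_comm (r₀ : ℂ)]

/-! ### The two-sided quasi-basis -/

/-- An identity between `w` and `∑ E (w aⱼ) dⱼ` that holds on the centralizer extends to `genC B`,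
by `B`-linearity and continuity. -/
lemma expansion_genC (hE : IsCondExp (B : Set D) E) {k : ℕ} {a d : Fin k → D}
    (h : ∀ c ∈ cent (B : Set D), c = ∑ j, E (c * a j) * d j) :
    ∀ w ∈ genC (B : Set D), w = ∑ j, E (w * a j) * d j := by
  intro w hw
  have hcont := ce_continuous hE
  have hcl : IsClosed {w : D | w = ∑ j, E (w * a j) * d j} :=
    isClosed_eq continuous_id (by fun_prop)
  refine closure_minimal (fun x hx => ?_) hcl (genC_subset hw)
  change x = ∑ j, E (x * a j) * d j
  induction hx using Submodule.span_induction with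
  | mem x hx =>
    obtain ⟨b, hb, c, hc, rfl⟩ := hx
    conv_lhs => rw [h c hc, Finset.mul_sum]
    refine Finset.sum_congr rfl fun j _ => ?_
    rw [mul_assoc b, ce_left hE hb, mul_assoc]
  | zero => simp
  | add x y _ _ hx hy =>
    conv_lhs => rw [hx, hy]
    simp only [add_mul, map_add, Finset.sum_add_distrib]
  | smul z x _ hx =>
    conv_lhs => rw [hx]
    simp only [smul_mul_assoc, map_smul, Finset.smul_sum]

/-- The result for a bundled C*-algebra with its order. The quasi-basis is an orthonormal family in
the centralizer of maximal size; `bessel_index` bounds the size by the index `r₀`. -/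
theorem exists_two_sided_qb (hBc : IsClosed (B : Set D))
    (hDs : IsSimpleCStar (Set.univ : Set D)) (hBs : IsSimpleCStar (B : Set D))
    (hE₀ : IsMinimalCondExp (B : Set D) E) :
    ∃ (n : ℕ) (μ : Fin n → D),
      (∀ j, μ j ∈ cent (B : Set D)) ∧
      (∀ i j, E (star (μ i) * μ j) = if i = j then (1 : D) else 0) ∧
      (∀ w ∈ genC (B : Set D), w = ∑ j, E (w * μ j) * star (μ j)) ∧
      (∀ w ∈ genC (B : Set D), w = ∑ j, E (w * star (μ j)) * μ j) := by
  classical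
  rcases subsingleton_or_nontrivial D with hD | hD
  · exact ⟨0, fun i => i.elim0, fun i => i.elim0, fun i => i.elim0,
      fun _ _ => Subsingleton.elim _ _, fun _ _ => Subsingleton.elim _ _⟩
  obtain ⟨hE, r₀, n, l, hl, hr₀, hmin⟩ := hE₀
  have hr0 : (r₀ : ℂ) ≠ 0 := fun h => by
    rw [h, zero_smul] at hr₀
    have h1 : ∀ i, l i * star (l i) = 0 := fun i =>
      (Finset.sum_eq_zero_iff_of_nonneg fun i _ => mul_star_self_nonneg (l i)).1 hr₀ i
        (Finset.mem_univ i)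
    have h2 : ∀ i, l i = 0 := fun i => CStarRing.mul_star_self_eq_zero_iff _ |>.1 (h1 i)
    have := hl 1
    simp [h2] at this
  have hcomm : ∀ c ∈ cent (B : Set D), ∀ x, E (x * c) = E (c * x) := fun c hc x =>
    ce_comm_of_index hE hl hr0
      (fun c hc => index_of_minimal hE hBc hBs hDs hl hr₀ hmin hc) hc x
  have hstar : ∀ {a : D}, a ∈ cent (B : Set D) → star a ∈ cent (B : Set D) := fun ha => by
    rw [mem_cent_iff] at *; exact star_mem ha
  -- `P k`: the centralizer contains an orthonormal family with `k` members
  let P : ℕ → Prop := fun k => ∃ μ : Fin k → D, (∀ j, μ j ∈ cent (B : Set D)) ∧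
    ∀ i j, E (star (μ i) * μ j) = if i = j then (1 : D) else 0
  have hbd : ∀ k, P k → k ≤ ⌊r₀⌋₊ := by
    rintro k ⟨μ, hμc, hμ⟩
    obtain ⟨m, hm⟩ := bessel_index hE hl hμ
    have h1 : 0 ≤ E (∑ i, m i * star (m i)) := by
      rw [map_sum]
      exact Finset.sum_nonneg fun i _ => by simpa using ce_nonneg hE (star (m i))
    have h2 : ∀ j, E (μ j * star (μ j)) = 1 := fun j => by
      rw [hcomm _ (hstar (hμc j)), hμ, if_pos rfl]
    rw [← hm, hr₀, map_sub, map_smul, ce_one hE, map_sum] at h1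
    simp only [h2, Finset.sum_const, Finset.card_univ, Fintype.card_fin] at h1
    have h3 : (0 : D) ≤ ((r₀ - k : ℝ) : ℂ) • 1 := by
      rw [Complex.ofReal_sub, sub_smul, Complex.ofReal_natCast, Nat.cast_smul_eq_nsmul]
      exact h1
    exact Nat.le_floor (by linarith [real_scalar_nonneg h3])
  have hP0 : P 0 := ⟨fun i => i.elim0, fun i => i.elim0, fun i => i.elim0⟩
  obtain ⟨k, ⟨μ, hμc, hμ⟩, hmax⟩ : ∃ k, P k ∧ ¬ P (k + 1) := by
    by_contra! hcon
    have hall : ∀ k, P k := fun k => Nat.rec hP0 (fun k ih => hcon k ih) k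
    have := hbd _ (hall (⌊r₀⌋₊ + 1))
    omega
  -- maximality of the family: its orthogonal complement in the centralizer vanishes
  have hort : ∀ w ∈ cent (B : Set D), (∀ j, E (star (μ j) * w) = 0) → w = 0 := by
    intro w hw hw0
    by_contra hne
    obtain ⟨s, hs, hsE⟩ := ce_cent_pos hE hBc hBs hl hw hne
    have hsq : ((Real.sqrt s)⁻¹ : ℂ) * ((Real.sqrt s)⁻¹ : ℂ) * s = 1 := by
      rw [← mul_inv]
      have : (Real.sqrt s : ℂ) * (Real.sqrt s : ℂ) = s := by
        exact_mod_cast Real.mul_self_sqrt hs.le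
      rw [this, inv_mul_cancel₀]
      exact_mod_cast hs.ne'
    have hst : star ((Real.sqrt s)⁻¹ : ℂ) = ((Real.sqrt s)⁻¹ : ℂ) := by simp
    have hw0' : ∀ j, E (star w * μ j) = 0 := fun j => by
      have := congrArg star (hw0 j)
      rw [← ce_star hE] at this
      simpa using this
    refine hmax ⟨Fin.cons (((Real.sqrt s)⁻¹ : ℂ) • w) μ, fun j => ?_, fun i j => ?_⟩
    · refine Fin.cases ?_ (fun j => ?_) j
      · rw [mem_cent_iff] at *
        exact StarSubalgebra.smul_mem _ hw _
      · exact hμc j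
    · refine Fin.cases ?_ (fun i => ?_) i <;> refine Fin.cases ?_ (fun j => ?_) j
      · simp only [Fin.cons_zero, star_smul, hst, smul_mul_smul_comm, map_smul, hsE, smul_smul,
          hsq, one_smul, if_true]
      · simp [hw0', (Fin.succ_ne_zero j).symm]
      · simp [hw0]
      · simp [hμ]
  have hexpand : ∀ c ∈ cent (B : Set D), c = ∑ j, E (c * star (μ j)) * μ j := by
    intro c hc
    have hsc : ∀ j, ∃ z : ℂ, E (c * star (μ j)) = z • 1 := fun j =>
      ce_cent_scalar hE hBc hBs (by
        have h1 := hstar (hμc j)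
        rw [mem_cent_iff] at *
        exact mul_mem hc h1)
    choose z hz using hsc
    have hsum : ∑ j, E (c * star (μ j)) * μ j = ∑ j, z j • μ j := by simp [hz]
    rw [hsum, ← sub_eq_zero]
    refine hort _ ?_ fun i => ?_
    · have : ∀ j, μ j ∈ StarSubalgebra.centralizer ℂ (B : Set D) := fun j =>
        mem_cent_iff.1 (hμc j)
      rw [mem_cent_iff] at *
      exact sub_mem hc (sum_mem fun j _ => StarSubalgebra.smul_mem _ (this j) _)
    · rw [mul_sub, map_sub, ← hcomm _ (hstar (hμc i)), hz]
      simp [Finset.mul_sum, hμ]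
  refine ⟨k, μ, hμc, hμ, expansion_genC hE fun c hc => ?_, expansion_genC hE hexpand⟩
  -- take adjoints in the expansion of `c*`, then use that `E` is tracial against the centralizer
  have h1 := congrArg star (hexpand _ (hstar hc))
  rw [star_star, star_sum] at h1
  refine h1.trans (Finset.sum_congr rfl fun j _ => ?_)
  rw [star_mul, ← ce_star hE, star_mul, star_star, star_star, hstar (hμc j) _ (ce_mem hE _),
    hcomm _ (hμc j)]

end Helpers

/-- for an inclusion `B ⊆ A` of simple unital C*-algebras with a
finite-index conditional expectation and minimal conditional expectation `E₀`, the
restriction of `E₀` to `C := C*(B ∪ C_A(B))` admits a two-sided orthonormal quasi-basis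
contained in the centralizer `C_A(B)`. -/
theorem restriction_of_minimal_CE_has_two_sided_ON_quasi_basis
    (B : StarSubalgebra ℂ A) (hBclosed : IsClosed (B : Set A))
    (hAsimple : IsSimpleCStar (Set.univ : Set A))
    (hBsimple : IsSimpleCStar (B : Set A))
    (E : A →ₗ[ℂ] A) (hE : IsCondExp (B : Set A) E)
    (nE : ℕ) (lE : Fin nE → A) (hlE : IsRightQB E lE)
    (E₀ : A →ₗ[ℂ] A) (hE₀ : IsMinimalCondExp (B : Set A) E₀) :
    ∃ (n : ℕ) (μ : Fin n → A),
      (∀ j, μ j ∈ cent (B : Set A)) ∧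
      (∀ i j, E₀ (star (μ i) * μ j) = if i = j then (1 : A) else 0) ∧
      (∀ w ∈ genC (B : Set A), w = ∑ j, E₀ (w * μ j) * star (μ j)) ∧
      (∀ w ∈ genC (B : Set A), w = ∑ j, E₀ (w * star (μ j)) * μ j) := by
  let _ : CStarAlgebra A := {}
  let _ : PartialOrder A := CStarAlgebra.spectralOrder A
  have _ : StarOrderedRing A := CStarAlgebra.spectralOrderedRing A
  exact exists_two_sided_qb hBclosed hAsimple hBsimple hE₀

end RegularInclusion
end

section
/- Let B ⊆ A be an inclusion of unital C*-algebras with common unit such that the center of B equals ℂ·1, and let w ∈ N_A(B) with w ∉ U(B)·U(C_A(B)). Then Ad(w)|_B is a free automorphism of B, and E(w) = 0 for every conditional expectation E : A → B. Consequently, if u, v ∈ N_A(B) and v u* ∉ U(B)·U(C_A(B)), then E(v u*) = 0 = E(v* u). -/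
/-!
If `a ∈ B` intertwines `id` and `Ad(w)` on `B`, then `star w * a` commutes with `B`. Hence
`star a * a` and `a * star a` both lie in the center of `B`, so they are scalars. If `a ≠ 0` the two
scalars coincide and are positive, so a multiple of `a` is a unitary `b ∈ B`, and
`w = b * (star b * w)` lies in `U(B)·U(C_A(B))` (`eq_zero_of_intertwines`). By bimodularity `E w` is
such an intertwiner, so it vanishes. For the last assertion, `U(B)·U(C_A(B))` is stable under the
adjoint and under conjugation by the normalizer, and `star v * u = star v * star (v * star u) * v`,
so `v * star u ∉ U(B)·U(C_A(B))` forces `star v * u ∉ U(B)·U(C_A(B))`.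
-/

namespace RegularInclusion

variable {A : Type*} [NormedRing A] [StarRing A] [CStarRing A] [CompleteSpace A]
  [NormedAlgebra ℂ A] [StarModule ℂ A]

section Helpers

set_option linter.unusedSectionVars false

variable {B : StarSubalgebra ℂ A}

lemma cent_mul {S : Set A} {x y : A} (hx : x ∈ cent S) (hy : y ∈ cent S) :
    x * y ∈ cent S := fun b hb => by
  rw [mul_assoc, hy b hb, ← mul_assoc, hx b hb, mul_assoc]

lemma cent_star {x : A} (hx : x ∈ cent (B : Set A)) : star x ∈ cent (B : Set A) :=
  fun b hb => by
    simpa using (congrArg star (hx (star b) (star_mem hb))).symm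

lemma normalizer_conj_mem {S : Set A} {w x : A} (hw : w ∈ normalizer S) (hx : x ∈ S) :
    w * x * star w ∈ S := by
  have h : w * x * star w ∈ (fun x => w * x * star w) '' S := ⟨x, hx, rfl⟩
  rwa [hw.2] at h

lemma normalizer_star_mem {S : Set A} {w : A} (hw : w ∈ normalizer S) :
    star w ∈ normalizer S := by
  refine ⟨Unitary.star_mem hw.1, ?_⟩
  have h1 : star w * w = 1 := Unitary.star_mul_self_of_mem hw.1
  conv_lhs => rw [← hw.2]
  rw [Set.image_image]
  have h : ∀ x, star w * (w * x * star w) * star (star w) = x := fun x => by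
    rw [star_star]
    calc star w * (w * x * star w) * w = (star w * w) * x * (star w * w) := by noncomm_ring
      _ = x := by rw [h1, one_mul, mul_one]
  simp only [h, Set.image_id']

lemma normalizer_mul_mem {S : Set A} {v w : A} (hv : v ∈ normalizer S) (hw : w ∈ normalizer S) :
    v * w ∈ normalizer S := by
  refine ⟨mul_mem hv.1 hw.1, ?_⟩
  conv_rhs => rw [← hv.2, ← hw.2]
  rw [Set.image_image]
  simp only [star_mul, mul_assoc]

lemma cent_conj {S : Set A} {w x : A} (hw : w ∈ normalizer S) (hx : x ∈ cent S) :
    w * x * star w ∈ cent S := fun b hb => by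
  have h1 : star w * w = 1 := Unitary.star_mul_self_of_mem hw.1
  have h2 : w * star w = 1 := Unitary.mul_star_self_of_mem hw.1
  have hb' := hx _ (normalizer_conj_mem (normalizer_star_mem hw) hb)
  rw [star_star] at hb'
  calc w * x * star w * b = w * (x * (star w * b * w)) * star w := by
        simp only [mul_assoc, h2, mul_one]
    _ = (w * star w) * b * (w * x * star w) := by rw [hb']; noncomm_ring
    _ = b * (w * x * star w) := by rw [h2, one_mul]

lemma UBC_star {x : A} (hx : x ∈ UBC (B : Set A)) : star x ∈ UBC (B : Set A) := by
  obtain ⟨b, c, hb, hbu, hc, hcu, rfl⟩ := hx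
  refine ⟨star b, star c, star_mem hb, Unitary.star_mem hbu, cent_star hc,
    Unitary.star_mem hcu, ?_⟩
  rw [star_mul, cent_star hc _ (star_mem hb)]

lemma UBC_conj {w x : A} (hw : w ∈ normalizer (B : Set A)) (hx : x ∈ UBC (B : Set A)) :
    w * x * star w ∈ UBC (B : Set A) := by
  obtain ⟨b, c, hb, hbu, hc, hcu, rfl⟩ := hx
  have h1 : star w * w = 1 := Unitary.star_mul_self_of_mem hw.1
  refine ⟨w * b * star w, w * c * star w, normalizer_conj_mem hw hb,
    mul_mem (mul_mem hw.1 hbu) (Unitary.star_mem hw.1), cent_conj hw hc,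
    mul_mem (mul_mem hw.1 hcu) (Unitary.star_mem hw.1), ?_⟩
  calc w * (b * c) * star w = w * b * 1 * c * star w := by noncomm_ring
    _ = _ := by rw [← h1]; noncomm_ring

open scoped ComplexOrder in
/-- In a nontrivial C*-algebra a scalar of the form `star a * a` is a nonnegative real. -/
lemma scalar_nonneg [Nontrivial A] {a : A} {c : ℂ} (h : star a * a = c • (1 : A)) :
    ∃ r : ℝ, 0 ≤ r ∧ c = (r : ℂ) := by
  let : CStarAlgebra A := {}
  let := CStarAlgebra.spectralOrder A
  have := CStarAlgebra.spectralOrderedRing A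
  have h0 : 0 ≤ star a * a := star_mul_self_nonneg a
  have hc : c ∈ spectrum ℂ (star a * a) := by
    rw [h, ← Algebra.algebraMap_eq_smul_one, spectrum.scalar_eq]
    rfl
  have := spectrum_nonneg_of_nonneg h0 hc
  obtain ⟨h1, h2⟩ := Complex.nonneg_iff.mp this
  exact ⟨c.re, h1, Complex.ext rfl (by simp [← h2])⟩

/-- Freeness of `Ad(w)` on `B`: a nonzero intertwiner `a` is a multiple of a unitary `b ∈ B` for
which `star b * w` centralizes `B`. -/
lemma eq_zero_of_intertwines
    (hZB : ∀ z ∈ (B : Set A), (∀ x ∈ (B : Set A), z * x = x * z) → ∃ c : ℂ, z = c • (1 : A))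
    {w : A} (hw : w ∈ normalizer (B : Set A)) (hw' : w ∉ UBC (B : Set A))
    {a : A} (ha : a ∈ (B : Set A))
    (h : ∀ x ∈ (B : Set A), a * x = (w * x * star w) * a) : a = 0 := by
  by_contra ha0
  have : Nontrivial A := ⟨a, 0, ha0⟩
  have h1 : star w * w = 1 := Unitary.star_mul_self_of_mem hw.1
  have h2 : w * star w = 1 := Unitary.mul_star_self_of_mem hw.1
  have hk : star w * a ∈ cent (B : Set A) := fun x hx => by
    calc star w * a * x = star w * (a * x) := mul_assoc _ _ _
      _ = (star w * w) * x * (star w * a) := by rw [h x hx]; noncomm_ring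
      _ = x * (star w * a) := by rw [h1, one_mul]
  have hl : star a * a ∈ cent (B : Set A) := by
    have := cent_mul (cent_star hk) hk
    have e : star (star w * a) * (star w * a) = star a * a := by
      rw [star_mul, star_star]
      calc star a * w * (star w * a) = star a * (w * star w) * a := by noncomm_ring
        _ = _ := by rw [h2, mul_one]
    rwa [e] at this
  have hr : a * star a ∈ cent (B : Set A) := by
    have := cent_conj hw (cent_mul hk (cent_star hk))
    have e : w * (star w * a * star (star w * a)) * star w = a * star a := by
      rw [star_mul, star_star]
      calc w * (star w * a * (star a * w)) * star w
          = (w * star w) * (a * star a) * (w * star w) := by noncomm_ring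
        _ = _ := by rw [h2, mul_one, one_mul]
    rwa [e] at this
  obtain ⟨c, hc⟩ := hZB _ (mul_mem (star_mem ha) ha : star a * a ∈ B) hl
  obtain ⟨d, hd⟩ := hZB _ (mul_mem ha (star_mem ha) : a * star a ∈ B) hr
  -- associativity of `a * star a * a` identifies the two scalars
  have hcd : c = d := by
    have e : c • a = d • a := by
      calc c • a = a * (star a * a) := by rw [hc, mul_smul_comm, mul_one]
        _ = (a * star a) * a := (mul_assoc _ _ _).symm
        _ = d • a := by rw [hd, smul_mul_assoc, one_mul]
    exact smul_left_injective ℂ ha0 e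
  subst hcd
  obtain ⟨r, hr0, rfl⟩ := scalar_nonneg hc
  have hrpos : 0 < r := by
    refine lt_of_le_of_ne hr0 ?_
    rintro rfl
    apply ha0
    rw [← CStarRing.star_mul_self_eq_zero_iff, hc]
    simp
  set s : ℂ := (((Real.sqrt r)⁻¹ : ℝ) : ℂ) with hs
  have hss : star s = s := Complex.conj_ofReal _
  have hsr : s * s * (r : ℂ) = 1 := by
    rw [hs]
    norm_cast
    rw [← mul_inv, Real.mul_self_sqrt hr0, inv_mul_cancel₀ hrpos.ne']
  have hbB : s • a ∈ B := B.smul_mem ha s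
  have hbu : s • a ∈ unitary A := by
    rw [Unitary.mem_iff, star_smul, hss]
    constructor
    · rw [smul_mul_smul_comm, hc, smul_smul, hsr, one_smul]
    · rw [smul_mul_smul_comm, hd, smul_smul, hsr, one_smul]
  have hcc : star (s • a) * w ∈ cent (B : Set A) := by
    have hsk : s • (star w * a) ∈ cent (B : Set A) := fun x hx => by
      rw [smul_mul_assoc, hk x hx, mul_smul_comm]
    have := cent_star hsk
    rwa [← mul_smul_comm, star_mul, star_star] at this
  refine hw' ⟨s • a, star (s • a) * w, hbB, hbu, hcc, mul_mem (Unitary.star_mem hbu) hw.1, ?_⟩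
  rw [← mul_assoc, Unitary.mul_star_self_of_mem hbu, one_mul]

/-- Bimodularity makes `E w` an intertwiner of `id` and `Ad(w)` on `B`. -/
lemma condExp_eq_zero
    (hZB : ∀ z ∈ (B : Set A), (∀ x ∈ (B : Set A), z * x = x * z) → ∃ c : ℂ, z = c • (1 : A))
    {w : A} (hw : w ∈ normalizer (B : Set A)) (hw' : w ∉ UBC (B : Set A))
    {E : A →ₗ[ℂ] A} (hE : IsCondExp (B : Set A) E) : E w = 0 := by
  obtain ⟨hEB, -, -, hmod⟩ := hE
  have h1 : star w * w = 1 := Unitary.star_mul_self_of_mem hw.1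
  refine eq_zero_of_intertwines hZB hw hw' (hEB w) fun x hx => ?_
  have e1 := hmod 1 (one_mem B) x hx w
  have e2 := hmod _ (normalizer_conj_mem hw hx) 1 (one_mem B) w
  rw [one_mul, one_mul] at e1
  rw [mul_one, mul_one, mul_assoc _ (star w) w, h1, mul_one] at e2
  rw [← e1, e2]

end Helpers

/-- if `B ⊆ A` has `Z(B) = ℂ·1` and `w ∈ N_A(B) \ U(B)·U(C_A(B))`, then
`Ad(w)|_B` is free, `E(w) = 0` for every conditional expectation `E : A → B`, and
consequently `E(v u*) = 0 = E(v* u)` whenever `u, v ∈ N_A(B)` with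
`v u* ∉ U(B)·U(C_A(B))`. -/
theorem normalizer_outside_UBC_free_and_expectation_zero
    (B : StarSubalgebra ℂ A) (hBclosed : IsClosed (B : Set A))
    (hZB : ∀ z ∈ (B : Set A), (∀ x ∈ (B : Set A), z * x = x * z) → ∃ c : ℂ, z = c • (1 : A))
    (w : A) (hw : w ∈ normalizer (B : Set A)) (hw' : w ∉ UBC (B : Set A)) :
    (∀ a ∈ (B : Set A), (∀ x ∈ (B : Set A), a * x = (w * x * star w) * a) → a = 0) ∧
    (∀ E : A →ₗ[ℂ] A, IsCondExp (B : Set A) E → E w = 0) ∧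
    (∀ E : A →ₗ[ℂ] A, IsCondExp (B : Set A) E →
      ∀ u ∈ normalizer (B : Set A), ∀ v ∈ normalizer (B : Set A),
        v * star u ∉ UBC (B : Set A) → E (v * star u) = 0 ∧ E (star v * u) = 0) := by
  refine ⟨fun a ha h => eq_zero_of_intertwines hZB hw hw' ha h,
    fun E hE => condExp_eq_zero hZB hw hw' hE, fun E hE u hu v hv huv => ⟨?_, ?_⟩⟩
  · exact condExp_eq_zero hZB (normalizer_mul_mem hv (normalizer_star_mem hu)) huv hE
  · refine condExp_eq_zero hZB (normalizer_mul_mem (normalizer_star_mem hv) hu) (fun hmem => ?_) hE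
    -- `v * star u = v * star (star v * u) * star v`
    apply huv
    have h2 : v * star v = 1 := Unitary.mul_star_self_of_mem hv.1
    have := UBC_conj hv (UBC_star hmem)
    rwa [star_mul, star_star, mul_assoc, mul_assoc, h2, mul_one] at this

end RegularInclusion
end

section
/- Let B ⊆ A be an inclusion of unital C*-algebras with common unit such that the center of B equals ℂ·1, and suppose there exists a finite-index conditional expectation E : A → B. Then the generalized Weyl group W(B ⊂ A) = N_A(B)/(U(B)·U(C_A(B))) is a finite group. -/
/-! If `u` normalizes `B`, then `E u * b = (u b u*) * E u` for `b ∈ B`, so `(E u)* (E u)` and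
`(E u) (E u)*` are central in `B`, hence scalar.  If `E u ≠ 0`, then
`E u` is a multiple of a unitary `w ∈ B`, and `w* u` centralizes `B`, so `u ∈ U(B) U(C_A(B))`
(`mem_UBC_of_condExp_ne_zero`).  Hence representatives `u_j` of distinct cosets are orthonormal:
`E (u_j* u_k) = δ_{jk}`.

An orthonormal family has bounded length (`card_le_of_orthonormal`).  Put
`y_i = ∑_j u_j E(u_j* l_i)`, the orthogonal projection of `l_i` onto `∑_j u_j B`.  The quasi-basis
expansion of each `u_j*` gives `m • 1 = ∑_j u_j u_j* = ∑_i y_i l_i*`.  The Cauchy–Schwarz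
inequality for `E` (`norm_sq_condExp_le`) bounds `‖E (y_i* y_i)‖`, hence the coefficients
`E (y_i* l_k)` of `y_i*` in the quasi-basis, hence `‖y_i‖`, all independently of `m`. -/

namespace RegularInclusion

variable {A : Type*} [NormedRing A] [StarRing A] [CStarRing A] [CompleteSpace A]
  [NormedAlgebra ℂ A] [StarModule ℂ A]

/-- The order-theoretic step of the Cauchy–Schwarz inequality: with `w = E (y* x)`, `X = E (x* x)`
and `p* p = E (y* y)`, the element `q* q` is `E ((x - K⁻¹ y w)* (x - K⁻¹ y w))`. -/
lemma norm_sq_le_of_completed_square {C : Type*} [CStarAlgebra C] {w X p q : C} {K : ℝ}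
    (hK : 0 < K) (hp : ‖star p * p‖ ≤ K)
    (hq : star q * q = X - (2 * K⁻¹) • (star w * w)
      + (K⁻¹ * K⁻¹) • (star w * (star p * p) * w)) :
    ‖w‖ ^ 2 ≤ K * ‖X‖ := by
  let : PartialOrder C := CStarAlgebra.spectralOrder C
  have : StarOrderedRing C := CStarAlgebra.spectralOrderedRing C
  have hw : (0 : C) ≤ star w * w := star_mul_self_nonneg w
  have h1 : star w * (star p * p) * w ≤ K • (star w * w) :=
    (CStarAlgebra.star_left_conjugate_le_norm_smul (IsSelfAdjoint.star_mul_self p)).trans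
      (smul_le_smul_of_nonneg_right hp hw)
  have h2 : (K⁻¹ * K⁻¹) • (star w * (star p * p) * w) ≤ K⁻¹ • (star w * w) := by
    have := smul_le_smul_of_nonneg_left h1 (show 0 ≤ K⁻¹ * K⁻¹ by positivity)
    rwa [smul_smul, mul_assoc K⁻¹, inv_mul_cancel₀ hK.ne', mul_one] at this
  have h3 : (0 : C) ≤ X - (2 * K⁻¹) • (star w * w) + K⁻¹ • (star w * w) := by
    refine le_trans ?_ (add_le_add le_rfl h2)
    rw [← hq]
    exact star_mul_self_nonneg q
  have h4 : K⁻¹ • (star w * w) ≤ X := by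
    rw [← sub_nonneg]
    convert h3 using 1
    module
  have h5 := CStarAlgebra.norm_le_norm_of_nonneg_of_le
    (smul_nonneg (inv_nonneg.2 hK.le) hw) h4
  rw [norm_smul, CStarRing.norm_star_mul_self, Real.norm_of_nonneg (inv_nonneg.2 hK.le)] at h5
  calc ‖w‖ ^ 2 = K * (K⁻¹ * (‖w‖ * ‖w‖)) := by field_simp
    _ ≤ K * ‖X‖ := by gcongr

/-- A conditional expectation is `*`-preserving: it maps `4 h = (h + 1)² - (h - 1)²`, for `h`
self-adjoint, to a difference of positive elements. -/
lemma condExp_star {B : Set A} {E : A →ₗ[ℂ] A} (hE : IsCondExp B E) (x : A) :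
    E (star x) = star (E x) := by
  have hpos : ∀ y, star (E (star y * y)) = E (star y * y) := by
    intro y
    obtain ⟨z, hz⟩ := hE.2.2.1 y
    rw [hz, star_mul, star_star]
  have hsa : ∀ h : A, star h = h → star (E h) = E h := by
    intro h hh
    have e : h = (1 / 4 : ℂ) • (star (h + 1) * (h + 1) - star (h - 1) * (h - 1)) := by
      simp only [star_add, star_sub, star_one, hh]
      have : (h + 1) * (h + 1) - (h - 1) * (h - 1) = (4 : ℂ) • h := by
        have : (4 : ℂ) • h = (4 : ℕ) • h := by rw [← Nat.cast_smul_eq_nsmul ℂ]; norm_num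
        rw [this]
        noncomm_ring
      rw [this, smul_smul]
      norm_num
    rw [e, map_smul, map_sub, star_smul, star_sub, hpos, hpos]
    congr 1
    norm_num
  have h1 := hsa _ (realPart x).2
  have h2 := hsa _ (imaginaryPart x).2
  have hx := realPart_add_I_smul_imaginaryPart x
  have s1 : star (realPart x : A) = realPart x := (realPart x).2
  have s2 : star (imaginaryPart x : A) = imaginaryPart x := (imaginaryPart x).2
  rw [← hx]
  simp only [star_add, star_smul, map_add, map_smul, h1, h2, s1, s2]

lemma condExp_mul_right {B : StarSubalgebra ℂ A} {E : A →ₗ[ℂ] A} (hE : IsCondExp (B : Set A) E)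
    {b : A} (hb : b ∈ B) (x : A) : E (x * b) = E x * b := by
  simpa using hE.2.2.2 1 (one_mem B) b hb x

lemma condExp_mul_left {B : StarSubalgebra ℂ A} {E : A →ₗ[ℂ] A} (hE : IsCondExp (B : Set A) E)
    {b : A} (hb : b ∈ B) (x : A) : E (b * x) = b * E x := by
  simpa using hE.2.2.2 b hb 1 (one_mem B) x

/-- The Cauchy–Schwarz inequality for the `B`-valued inner product `E (x* y)`. -/
lemma norm_sq_condExp_le {B : StarSubalgebra ℂ A} {E : A →ₗ[ℂ] A}
    (hE : IsCondExp (B : Set A) E) (x y : A) {K : ℝ} (hK : 0 < K)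
    (hy : ‖E (star y * y)‖ ≤ K) : ‖E (star y * x)‖ ^ 2 ≤ K * ‖E (star x * x)‖ := by
  let : CStarAlgebra A := {}
  obtain ⟨p, hp⟩ := hE.2.2.1 y
  set w := E (star y * x) with hw
  have hwB : w ∈ B := hE.1 _
  have hwB' : star w ∈ B := star_mem hwB
  obtain ⟨q, hq⟩ := hE.2.2.1 (x - (K⁻¹ : ℂ) • (y * w))
  refine norm_sq_le_of_completed_square (p := p) (q := q) hK (hp ▸ hy) ?_
  have hxy : E (star x * y) = star w := by
    rw [hw, ← condExp_star hE, star_mul, star_star]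
  have hstar : star ((K : ℂ)⁻¹) = (K : ℂ)⁻¹ := by simp
  have expand : star (x - (K⁻¹ : ℂ) • (y * w)) * (x - (K⁻¹ : ℂ) • (y * w))
      = star x * x - (K⁻¹ : ℂ) • ((star x * y) * w) - (K⁻¹ : ℂ) • (star w * (star y * x))
        + ((K⁻¹ : ℂ) * K⁻¹) • ((star w * (star y * y)) * w) := by
    simp only [star_sub, star_smul, star_mul, hstar, sub_mul, mul_sub, smul_mul_assoc,
      mul_smul_comm, mul_assoc]
    module
  rw [← hq, expand]
  simp only [map_add, map_sub, map_smul]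
  rw [condExp_mul_right hE hwB, condExp_mul_left hE hwB', condExp_mul_right hE hwB,
    condExp_mul_left hE hwB', hxy, ← hw, hp]
  have c1 : ∀ (r : ℝ) (a : A), r • a = (r : ℂ) • a := fun r a => (Complex.coe_smul r a).symm
  rw [c1, c1]
  push_cast
  module

/-- A family that is orthonormal for `E (x* y)` and consists of unitaries has length bounded in
terms of the quasi-basis. -/
lemma card_le_of_orthonormal [Nontrivial A] {B : StarSubalgebra ℂ A} {E : A →ₗ[ℂ] A}
    (hE : IsCondExp (B : Set A) E) {n : ℕ} {l : Fin n → A} (hl : IsRightQB E l)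
    {m : ℕ} {u : Fin m → A} (hu : ∀ j, u j ∈ unitary A)
    (horth : ∀ j k, j ≠ k → E (star (u j) * u k) = 0) :
    (m : ℝ) ≤ (1 + ∑ i, ‖E (star (l i) * l i)‖) * (∑ i, ‖l i‖) ^ 2 := by
  set K : ℝ := 1 + ∑ i, ‖E (star (l i) * l i)‖ with hKdef
  set S : ℝ := ∑ i, ‖l i‖ with hS
  have hK : 0 < K := by positivity
  have hlK : ∀ i, ‖E (star (l i) * l i)‖ ≤ K := by
    intro i
    have := Finset.single_le_sum (f := fun i => ‖E (star (l i) * l i)‖)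
      (fun i _ => norm_nonneg _) (Finset.mem_univ i)
    linarith
  have hE1 : E 1 = 1 := hE.2.1 1 (one_mem B)
  have horth' : ∀ j k, E (star (u j) * u k) = if j = k then 1 else 0 := by
    intro j k
    split_ifs with h
    · subst h
      rw [Unitary.star_mul_self_of_mem (hu j), hE1]
    · exact horth j k h
  let c : Fin m → Fin n → A := fun j i => E (star (u j) * l i)
  have hcB : ∀ j i, c j i ∈ B := fun j i => hE.1 _
  let y : Fin n → A := fun i => ∑ j, u j * c j i
  -- `y i` has the same inner products with the `u j` as `l i`.
  have huy : ∀ j i, E (star (u j) * y i) = c j i := by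
    intro j i
    simp only [y, Finset.mul_sum, map_sum, ← mul_assoc]
    simp [condExp_mul_right hE (hcB _ i), horth']
  have hsy : ∀ i x, E (star (y i) * x) = ∑ j, star (c j i) * E (star (u j) * x) := by
    intro i x
    simp only [y, star_sum, star_mul, Finset.sum_mul, map_sum, mul_assoc]
    exact Finset.sum_congr rfl fun j _ => condExp_mul_left hE (star_mem (hcB j i)) _
  have hyy : ∀ i, E (star (y i) * y i) = E (star (y i) * l i) := by
    intro i
    rw [hsy, hsy]
    simp only [huy]
    rfl
  have hswap : ∀ a b : A, ‖E (star a * b)‖ = ‖E (star b * a)‖ := by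
    intro a b
    rw [← norm_star (E (star a * b)), ← condExp_star hE, star_mul, star_star]
  have hyK : ∀ i, ‖E (star (y i) * y i)‖ ≤ K := by
    intro i
    have h := norm_sq_condExp_le hE (y i) (l i) hK (hlK i)
    rw [hswap, ← hyy] at h
    by_contra hlt
    push Not at hlt
    nlinarith
  have hyl : ∀ i k, ‖E (star (y i) * l k)‖ ≤ K := by
    intro i k
    have h := norm_sq_condExp_le hE (l k) (y i) hK (hyK i)
    have h' := mul_le_mul_of_nonneg_left (hlK k) hK.le
    exact abs_le_of_sq_le_sq' (by nlinarith) hK.le |>.2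
  have hynorm : ∀ i, ‖y i‖ ≤ K * S := by
    intro i
    rw [← norm_star, hl (star (y i)), hS, Finset.mul_sum]
    refine (norm_sum_le _ _).trans (Finset.sum_le_sum fun k _ => ?_)
    refine (norm_mul_le _ _).trans ?_
    rw [norm_star]
    exact mul_le_mul_of_nonneg_right (hyl i k) (norm_nonneg _)
  have hsum : (m : A) = ∑ i, y i * star (l i) := by
    have h1 : ∀ j, (1 : A) = ∑ i, u j * c j i * star (l i) := by
      intro j
      rw [← Unitary.mul_star_self_of_mem (hu j)]
      conv_lhs => rw [hl (star (u j))]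
      simp only [Finset.mul_sum, mul_assoc, c]
    simp only [y, Finset.sum_mul]
    rw [Finset.sum_comm, ← Finset.sum_congr rfl fun j _ => h1 j]
    simp
  have hm : (m : ℝ) = ‖(m : A)‖ := by
    have h1 : ‖(1 : A)‖ = 1 := CStarRing.norm_one
    have : (m : A) = (m : ℂ) • (1 : A) := by rw [Nat.cast_smul_eq_nsmul, nsmul_one]
    rw [this, norm_smul, h1]
    simp
  rw [hm, hsum]
  calc ‖∑ i, y i * star (l i)‖ ≤ ∑ i, K * S * ‖l i‖ := by
        refine (norm_sum_le _ _).trans (Finset.sum_le_sum fun i _ => ?_)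
        refine (norm_mul_le _ _).trans ?_
        rw [norm_star]
        exact mul_le_mul_of_nonneg_right (hynorm i) (norm_nonneg _)
    _ = K * S ^ 2 := by rw [← Finset.mul_sum]; ring

lemma star_mul_mem_normalizer {B : Set A} {u v : A} (hu : u ∈ normalizer B)
    (hv : v ∈ normalizer B) : star u * v ∈ normalizer B := by
  obtain ⟨hu1, hu2⟩ := hu
  obtain ⟨hv1, hv2⟩ := hv
  refine ⟨mul_mem (Unitary.star_mem hu1) hv1, ?_⟩
  have e : (fun x => star u * v * x * star (star u * v))
      = (fun x => star u * x * u) ∘ (fun x => v * x * star v) := by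
    funext x
    simp [mul_assoc]
  rw [e, Set.image_comp, hv2]
  conv_lhs => rw [← hu2]
  rw [← Set.image_comp]
  have e2 : (fun x => star u * x * u) ∘ (fun x => u * x * star u) = id := by
    funext x
    have h := Unitary.star_mul_self_of_mem hu1
    calc star u * (u * x * star u) * u = (star u * u) * x * (star u * u) := by
          simp only [mul_assoc]
      _ = x := by rw [h]; simp
  rw [e2, Set.image_id]

/-- A normalizing unitary with nonzero expectation represents the trivial class. -/
lemma mem_UBC_of_condExp_ne_zero {B : StarSubalgebra ℂ A}
    (hZB : ∀ z ∈ (B : Set A), (∀ x ∈ (B : Set A), z * x = x * z) → ∃ c : ℂ, z = c • (1 : A))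
    {E : A →ₗ[ℂ] A} (hE : IsCondExp (B : Set A) E) {u : A}
    (hu : u ∈ normalizer (B : Set A)) (hne : E u ≠ 0) : u ∈ UBC (B : Set A) := by
  obtain ⟨hu1, hu2⟩ := hu
  have huu := Unitary.star_mul_self_of_mem hu1
  have huu' := Unitary.mul_star_self_of_mem hu1
  have hσ : ∀ b ∈ B, u * b * star u ∈ B := fun b hb => by
    have : u * b * star u ∈ (B : Set A) := hu2 ▸ ⟨b, hb, rfl⟩
    exact this
  have hub : ∀ b, u * b = (u * b * star u) * u := by
    intro b
    rw [mul_assoc, huu, mul_one]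
  set e := E u with he
  have heB : e ∈ B := hE.1 u
  have hint : ∀ b ∈ B, e * b = (u * b * star u) * e := by
    intro b hb
    rw [he, ← condExp_mul_right hE hb, ← condExp_mul_left hE (hσ b hb), ← hub]
  have hint' : ∀ b ∈ B, b * star e = star e * (u * b * star u) := by
    intro b hb
    have := congrArg star (hint (star b) (star_mem hb))
    simpa [mul_assoc] using this
  obtain ⟨c, hc⟩ := hZB (star e * e) (mul_mem (star_mem heB) heB) (by
    intro b hb
    rw [mul_assoc, hint b hb, ← mul_assoc, ← hint' b hb, mul_assoc])
  obtain ⟨d, hd⟩ := hZB (e * star e) (mul_mem heB (star_mem heB)) (by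
    intro b hb
    obtain ⟨a, ha, rfl⟩ : b ∈ (fun x => u * x * star u) '' (B : Set A) := by rwa [hu2]
    simp only
    rw [mul_assoc, ← hint' a ha, ← mul_assoc, hint a ha, mul_assoc])
  have hnt : Nontrivial A := ⟨⟨e, 0, hne⟩⟩
  have h1 : ‖(1 : A)‖ = 1 := CStarRing.norm_one
  have hpos : 0 < ‖e‖ := norm_pos_iff.2 hne
  -- Both scalars agree, since `e e* e` is computed by either of them.
  have hcd : c = d := by
    have h : c • e = d • e := by
      have := mul_assoc e (star e) e
      rw [hc, hd] at this
      simpa using this.symm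
    exact smul_left_injective ℂ hne h
  subst hcd
  -- The scalar is `‖e‖²`: it is positive because `e* e` is.
  have hcn : c = ((‖e‖ ^ 2 : ℝ) : ℂ) := by
    let : CStarAlgebra A := {}
    let : PartialOrder A := CStarAlgebra.spectralOrder A
    have : StarOrderedRing A := CStarAlgebra.spectralOrderedRing A
    have hnn : (0 : A) ≤ star e * e := star_mul_self_nonneg e
    have hmem : c ∈ spectrum ℂ (star e * e) := by
      rw [hc, ← Algebra.algebraMap_eq_smul_one, spectrum.scalar_eq]
      rfl
    have hcnorm : ‖c‖ = ‖e‖ ^ 2 := by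
      have := congrArg norm hc
      rw [CStarRing.norm_star_mul_self, norm_smul, h1, mul_one] at this
      rw [← this, sq]
    rw [← hcnorm]
    open ComplexOrder in
    exact (Complex.norm_of_nonneg' (spectrum_nonneg_of_nonneg hnn hmem)).symm
  set r : ℂ := ((‖e‖⁻¹ : ℝ) : ℂ) with hr
  have hrc : r * r * c = 1 := by
    rw [hr, hcn]
    norm_cast
    field_simp
  have hrs : star r = r := by simp [hr]
  set w : A := r • e with hw
  have hwB : w ∈ B := B.smul_mem heB r
  have hww : star w * w = 1 := by
    rw [hw, star_smul, hrs, smul_mul_smul_comm, hc, smul_smul, hrc, one_smul]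
  have hww' : w * star w = 1 := by
    rw [hw, star_smul, hrs, smul_mul_smul_comm, hd, smul_smul, hrc, one_smul]
  have hwU : w ∈ unitary A := Unitary.mem_iff.2 ⟨hww, hww'⟩
  refine ⟨w, star w * u, hwB, hwU, ?_, mul_mem (Unitary.star_mem hwU) hu1, ?_⟩
  · intro b hb
    have h : b * star w = star w * (u * b * star u) := by
      rw [hw, star_smul, mul_smul_comm, hint' b hb, smul_mul_assoc]
    rw [← mul_assoc, h, mul_assoc, mul_assoc, ← hub b]
  · rw [← mul_assoc, hww', one_mul]

/-- if `B ⊆ A` has `Z(B) = ℂ·1` and there is a finite-index conditional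
expectation `E : A → B`, then the generalized Weyl group
`W(B ⊂ A) = N_A(B)/(U(B)·U(C_A(B)))` is finite, i.e. there are finitely many cosets. -/
theorem generalized_Weyl_group_finite
    (B : StarSubalgebra ℂ A) (hBclosed : IsClosed (B : Set A))
    (hZB : ∀ z ∈ (B : Set A), (∀ x ∈ (B : Set A), z * x = x * z) → ∃ c : ℂ, z = c • (1 : A))
    (E : A →ₗ[ℂ] A) (hE : IsCondExp (B : Set A) E)
    (n : ℕ) (l : Fin n → A) (hl : IsRightQB E l) :
    ∃ (m : ℕ) (u : Fin m → A),
      (∀ i, u i ∈ normalizer (B : Set A)) ∧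
      (∀ v ∈ normalizer (B : Set A), ∃ i, star (u i) * v ∈ UBC (B : Set A)) := by
  by_cases hA : Nontrivial A
  · by_contra hcon
    push Not at hcon
    -- Greedy choice of arbitrarily many pairwise inequivalent normalizing unitaries.
    have key : ∀ m : ℕ, ∃ u : Fin m → A, (∀ i, u i ∈ normalizer (B : Set A)) ∧
        ∀ i j, i < j → star (u i) * u j ∉ UBC (B : Set A) := by
      intro m
      induction m with
      | zero => exact ⟨Fin.elim0, fun i => i.elim0, fun i => i.elim0⟩
      | succ m ih =>
        obtain ⟨u, hu, hu'⟩ := ih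
        obtain ⟨v, hv, hv'⟩ := hcon m u hu
        refine ⟨Fin.snoc (α := fun _ => A) u v, fun i => ?_, fun i j => ?_⟩
        · induction i using Fin.lastCases with
          | last => simpa using hv
          | cast i => simpa using hu i
        · induction i using Fin.lastCases with
          | last => exact fun h => absurd h (not_lt.2 (Fin.le_last j))
          | cast i =>
            induction j using Fin.lastCases with
            | last => intro _; simpa using hv' i
            | cast j =>
              intro h
              simpa using hu' i j (by simpa using h)
    obtain ⟨m, hm⟩ := exists_nat_gt
      ((1 + ∑ i, ‖E (star (l i) * l i)‖) * (∑ i, ‖l i‖) ^ 2)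
    obtain ⟨u, hu, hu'⟩ := key m
    have hlt : ∀ i j, i < j → E (star (u i) * u j) = 0 := by
      intro i j hij
      by_contra hne
      exact hu' i j hij
        (mem_UBC_of_condExp_ne_zero hZB hE (star_mul_mem_normalizer (hu i) (hu j)) hne)
    have horth : ∀ j k, j ≠ k → E (star (u j) * u k) = 0 := by
      intro j k hjk
      rcases lt_or_gt_of_ne hjk with h | h
      · exact hlt j k h
      · have := congrArg star (hlt k j h)
        rwa [← condExp_star hE, star_mul, star_star, star_zero] at this
    exact absurd (card_le_of_orthonormal hE hl (fun j => (hu j).1) horth) (not_le.2 hm)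
  · -- In the zero algebra all elements coincide.
    have hsub : Subsingleton A := not_nontrivial_iff_subsingleton.1 hA
    refine ⟨1, fun _ => 1, fun _ => ⟨one_mem _, ?_⟩, fun v _ => ⟨0, 1, 1, one_mem B, one_mem _,
      fun _ _ => Subsingleton.elim _ _, one_mem _, Subsingleton.elim _ _⟩⟩
    simp

end RegularInclusion
end

section
/- Let B ⊆ A be an inclusion of simple unital C*-algebras with common unit admitting a finite-index conditional expectation E : A → B, and let C := C*(B ∪ C_A(B)). If θ is a *-automorphism of C with θ(B) = B whose restriction to B is an outer automorphism of B, then θ is a free automorphism of C. -/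
/-!
Let `a ∈ C` satisfy `a x = θ(x) a` for all `x ∈ C`. For `c ∈ C_A(B)` the element `y = E(a c)` of
`B` satisfies `y b = θ(b) y` for all `b ∈ B`, because `E` is `B`-bimodular and `c` commutes with
`B`. Hence `y* y` and `y y*` are central in `B` (here `θ(B) = B` is used), so they are scalars by
simplicity of `B` (`exists_eq_algebraMap_of_central`), and if `y ≠ 0` a multiple of `y` is a unitary
of `B` implementing `θ` on `B` (`exists_smul_mem_unitary`), contradicting outerness. So
`E(a c) = 0`, whence `E(a c b) = 0` for `b ∈ B`. The products `c b` span a dense subspace of `C`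
(`genC_subset_closure_span`) and `E` is continuous, so `E(a x) = 0` for all `x ∈ C`, in particular
`E(a a*) = 0`. By a Kadison inequality `E(a x) = 0` then holds for every `x ∈ A`
(`IsCondExp.apply_mul_eq_zero`), and expanding `a = ∑ E(a λᵢ) λᵢ*` in the quasi-basis gives `a = 0`.
-/

namespace RegularInclusion

variable {A : Type*} [NormedRing A] [StarRing A] [CStarRing A] [CompleteSpace A]
  [NormedAlgebra ℂ A] [StarModule ℂ A]

/-! ### Conditional expectations -/

lemma IsCondExp.exists_positiveLinearMap [PartialOrder A] [StarOrderedRing A]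
    {B : Set A} {E : A →ₗ[ℂ] A} (hE : IsCondExp B E) :
    ∃ F : A →ₚ[ℂ] A, ∀ x, F x = E x := by
  let : CStarAlgebra A := {}
  refine ⟨PositiveLinearMap.mk₀ E fun x hx => ?_, fun x => rfl⟩
  obtain ⟨z, rfl⟩ := CStarAlgebra.nonneg_iff_eq_star_mul_self.mp hx
  obtain ⟨y, hy⟩ := hE.2.2.1 z
  rw [hy]
  exact star_mul_self_nonneg y

lemma IsCondExp.continuous {B : Set A} {E : A →ₗ[ℂ] A} (hE : IsCondExp B E) :
    Continuous E := by
  let : CStarAlgebra A := {}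
  let := CStarAlgebra.spectralOrder A
  have := CStarAlgebra.spectralOrderedRing A
  obtain ⟨F, hF⟩ := hE.exists_positiveLinearMap
  have : (E : A → A) = F := funext fun x => (hF x).symm
  rw [this]
  exact map_continuous F

/-- If `E (a a*) = 0` then `E` vanishes on `a A`. This follows from the Kadison inequality
`E(y)* E(y) ≤ E(y* y)`, applied to `y = (a x)*`, and `a x x* a* ≤ ‖x‖² a a*`. -/
lemma IsCondExp.apply_mul_eq_zero {B : StarSubalgebra ℂ A} {E : A →ₗ[ℂ] A}
    (hE : IsCondExp (B : Set A) E) {a : A} (ha : E (a * star a) = 0) (x : A) :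
    E (a * x) = 0 := by
  let : CStarAlgebra A := {}
  let := CStarAlgebra.spectralOrder A
  have := CStarAlgebra.spectralOrderedRing A
  obtain ⟨F, hF⟩ := hE.exists_positiveLinearMap
  have hstar (y : A) : E (star y) = star (E y) := by
    rw [← hF, ← hF]; exact map_star F y
  have hmono {y z : A} (h : y ≤ z) : E y ≤ E z := by
    rw [← hF, ← hF]; exact OrderHomClass.mono F h
  obtain ⟨hEB, hEid, -, hEmod⟩ := hE
  have hleft (b : A) (hb : b ∈ B) (y : A) : E (b * y) = b * E y := by
    simpa using hEmod b hb 1 B.one_mem y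
  have hright (b : A) (hb : b ∈ B) (y : A) : E (y * b) = E y * b := by
    simpa using hEmod 1 B.one_mem b hb y
  have kadison (y : A) : star (E y) * E y ≤ E (star y * y) := by
    have h0 : 0 ≤ E (star (y - E y) * (y - E y)) := by
      simpa using hmono (star_mul_self_nonneg (y - E y))
    have hs : star (E y) ∈ B := star_mem (hEB y)
    have h1 : E (star (y - E y) * (y - E y)) = E (star y * y) - star (E y) * E y := by
      simp only [star_sub, sub_mul, mul_sub, map_sub, hleft _ hs, hright _ (hEB y), hstar,
        hEid _ (hEB y)]
      abel
    rw [h1] at h0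
    exact sub_nonneg.mp h0
  have h1 : a * x * (star x * star a) ≤ (‖x‖ ^ 2 : ℝ) • (a * star a) := by
    have h := star_right_conjugate_le_conjugate
      (CStarAlgebra.mul_star_le_algebraMap_norm_sq (a := x)) a
    simpa [mul_assoc, Algebra.algebraMap_eq_smul_one] using h
  have h2 : E (a * x * (star x * star a)) ≤ 0 := by
    refine (hmono h1).trans_eq ?_
    rw [LinearMap.map_smul_of_tower, ha, smul_zero]
  have h3 := kadison (star (a * x))
  rw [star_star, star_mul] at h3
  have h4 := le_antisymm (h3.trans h2) (star_mul_self_nonneg _)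
  rw [CStarRing.star_mul_self_eq_zero_iff, ← star_mul, hstar, star_eq_zero] at h4
  exact h4

/-! ### The centre of a simple C*-algebra -/

/-- Every `z` in the centre of `B` is a scalar: for `lam` in its spectrum the closed ideal of `B`
generated by `z - lam` cannot contain `1`, as `z - lam` would be invertible. -/
lemma exists_eq_algebraMap_of_central [Nontrivial A] {B : StarSubalgebra ℂ A}
    (hB : IsClosed (B : Set A)) (hsimple : IsSimpleCStar (B : Set A)) {z : A} (hz : z ∈ B)
    (hcomm : ∀ b ∈ B, z * b = b * z) :
    ∃ lam ∈ spectrum ℂ z, z = algebraMap ℂ A lam := by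
  obtain ⟨lam, hlam⟩ := spectrum.nonempty z
  refine ⟨lam, hlam, ?_⟩
  set w : A := z - algebraMap ℂ A lam with hw
  have hwB : w ∈ B := sub_mem hz (B.algebraMap_mem lam)
  have hwc (b : A) (hb : b ∈ B) : w * b = b * w := by
    rw [hw, sub_mul, mul_sub, hcomm b hb, Algebra.commutes lam b]
  have hnu : ¬ IsUnit w := by
    rw [spectrum.mem_iff, IsUnit.sub_iff] at hlam
    exact hlam
  let J : Set A := (fun b => w * b) '' (B : Set A)
  have hJB : closure J ⊆ (B : Set A) := by
    refine closure_minimal ?_ hB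
    rintro _ ⟨b, hb, rfl⟩
    exact mul_mem hwB hb
  have hwJ : w ∈ closure J := subset_closure ⟨1, B.one_mem, mul_one w⟩
  have hadd (x : A) (hx : x ∈ closure J) (y : A) (hy : y ∈ closure J) : x + y ∈ closure J := by
    refine map_mem_closure₂ continuous_add hx hy ?_
    rintro _ ⟨b, hb, rfl⟩ _ ⟨c, hc, rfl⟩
    exact ⟨b + c, add_mem hb hc, mul_add _ _ _⟩
  have hmul (x : A) (hx : x ∈ closure J) (b : A) (hb : b ∈ (B : Set A)) :
      x * b ∈ closure J ∧ b * x ∈ closure J := by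
    constructor
    · refine map_mem_closure (f := fun t => t * b) (by fun_prop) hx ?_
      rintro _ ⟨c, hc, rfl⟩
      exact ⟨c * b, mul_mem hc hb, (mul_assoc _ _ _).symm⟩
    · refine map_mem_closure (f := fun t => b * t) (by fun_prop) hx ?_
      rintro _ ⟨c, hc, rfl⟩
      refine ⟨b * c, mul_mem hb hc, ?_⟩
      simp only [← mul_assoc, hwc b hb]
  rcases hsimple (closure J) hJB isClosed_closure
    (subset_closure ⟨0, B.zero_mem, mul_zero w⟩) hadd hmul with h | h
  · rw [h] at hwJ
    exact sub_eq_zero.mp hwJ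
  · exfalso
    have h1 : (1 : A) ∈ closure J := h ▸ B.one_mem
    obtain ⟨_, ⟨b, hb, rfl⟩, hdist⟩ := Metric.mem_closure_iff.mp h1 1 one_pos
    rw [dist_eq_norm] at hdist
    have hu : IsUnit (w * b) := by
      simpa using isUnit_one_sub_of_norm_lt_one hdist
    exact hnu ((Commute.isUnit_mul_iff (hwc b hb)).mp hu).1

/-- If `y* y` and `y y*` are central in the simple algebra `B` and `y ≠ 0`, then both are
the same positive scalar, so a multiple of `y` is unitary. -/
lemma exists_smul_mem_unitary {B : StarSubalgebra ℂ A}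
    (hB : IsClosed (B : Set A)) (hsimple : IsSimpleCStar (B : Set A)) {y : A} (hy : y ∈ B)
    (hy0 : y ≠ 0) (h₁ : ∀ b ∈ B, star y * y * b = b * (star y * y))
    (h₂ : ∀ b ∈ B, y * star y * b = b * (y * star y)) :
    ∃ s : ℂ, s • y ∈ unitary A := by
  let : CStarAlgebra A := {}
  have : Nontrivial A := ⟨y, 0, hy0⟩
  obtain ⟨lam, hlam, hl⟩ :=
    exists_eq_algebraMap_of_central hB hsimple (mul_mem (star_mem hy) hy) h₁
  obtain ⟨mu, -, hm⟩ :=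
    exists_eq_algebraMap_of_central hB hsimple (mul_mem hy (star_mem hy)) h₂
  have hlm : mu = lam := by
    have h : mu • y = lam • y := by
      rw [Algebra.smul_def, Algebra.smul_def, ← hm, mul_assoc, hl]
      exact (Algebra.commutes lam y).symm
    exact smul_left_injective ℂ hy0 h
  subst hlm
  have hsa : IsSelfAdjoint (star y * y) := .star_mul_self y
  have hre : mu = (mu.re : ℂ) := hsa.mem_spectrum_eq_re hlam
  have hnn : 0 ≤ mu.re := by
    refine spectrum_star_mul_self_nonneg (b := y) mu.re ?_
    rw [← spectrum.preimage_algebraMap ℂ]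
    change (mu.re : ℂ) ∈ spectrum ℂ (star y * y)
    rwa [← hre]
  have hne : mu.re ≠ 0 := fun h => by
    rw [hre, h, Complex.ofReal_zero, map_zero, CStarRing.star_mul_self_eq_zero_iff] at hl
    exact hy0 hl
  let s : ℝ := (√mu.re)⁻¹
  have hs : s * s * mu.re = 1 := by
    rw [← mul_inv, Real.mul_self_sqrt hnn, inv_mul_cancel₀ hne]
  have hsmu : (s : ℂ) * s * mu = 1 := by
    rw [hre]; exact_mod_cast hs
  refine ⟨s, ?_⟩
  rw [Unitary.mem_iff]
  constructor
  · rw [star_smul, smul_mul_smul_comm, hl, Algebra.algebraMap_eq_smul_one, smul_smul]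
    simp [hsmu]
  · rw [star_smul, smul_mul_smul_comm, hm, Algebra.algebraMap_eq_smul_one, smul_smul]
    simp [hsmu]

/-! ### The algebra generated by `B` and its centralizer -/

/-- `C*(B ∪ C_A(B))` lies in the closed linear span of the products `c b` with
`c ∈ C_A(B)`, `b ∈ B`. -/
lemma genC_subset_closure_span (B : StarSubalgebra ℂ A) :
    (genC (B : Set A) : Set A) ⊆
      closure (Submodule.span ℂ {x | ∃ c ∈ cent (B : Set A), ∃ b ∈ B, x = c * b} : Set A) := by
  set W := Submodule.span ℂ {x | ∃ c ∈ cent (B : Set A), ∃ b ∈ B, x = c * b} with hW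
  have hone : (1 : A) ∈ cent (B : Set A) := fun b _ => by simp
  have hstar {c : A} (hc : c ∈ cent (B : Set A)) : star c ∈ cent (B : Set A) := fun b hb => by
    have := congrArg star (hc (star b) (star_mem hb))
    simpa using this.symm
  -- Both `B` and `C_A(B)` map the span of the products into itself by left multiplication.
  have hgen {x : A} (hx : x ∈ (B : Set A) ∪ cent (B : Set A)) :
      ∀ w ∈ W, x * w ∈ W := by
    intro w hw
    induction hw using Submodule.span_induction with
    | mem w hw =>
      obtain ⟨c, hc, b, hb, rfl⟩ := hw
      rcases hx with hx | hx
      · exact Submodule.subset_span ⟨c, hc, x * b, mul_mem hx hb, by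
          rw [← mul_assoc, ← hc x hx, mul_assoc]⟩
      · exact Submodule.subset_span ⟨x * c, fun d hd => by
          rw [mul_assoc, hc d hd, ← mul_assoc, hx d hd, mul_assoc], b, hb, (mul_assoc _ _ _).symm⟩
    | zero => simp
    | add u v _ _ hu hv => rw [mul_add]; exact add_mem hu hv
    | smul r u _ hu => rw [mul_smul_comm]; exact W.smul_mem r hu
  have hmain : ∀ x ∈ StarAlgebra.adjoin ℂ ((B : Set A) ∪ cent (B : Set A)),
      (∀ w ∈ W, x * w ∈ W) ∧ (∀ w ∈ W, star x * w ∈ W) := by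
    intro x hx
    induction hx using StarAlgebra.adjoin_induction with
    | mem x hx => exact ⟨hgen hx, hgen (hx.imp (fun h => star_mem (s := B) h) hstar)⟩
    | algebraMap r =>
      constructor <;> intro w hw
      · rw [← Algebra.smul_def]; exact W.smul_mem _ hw
      · rw [← algebraMap_star_comm, ← Algebra.smul_def]; exact W.smul_mem _ hw
    | add u v _ _ hu hv =>
      constructor <;> intro w hw
      · rw [add_mul]; exact add_mem (hu.1 w hw) (hv.1 w hw)
      · rw [star_add, add_mul]; exact add_mem (hu.2 w hw) (hv.2 w hw)
    | mul u v _ _ hu hv =>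
      constructor <;> intro w hw
      · rw [mul_assoc]; exact hu.1 _ (hv.1 w hw)
      · rw [star_mul, mul_assoc]; exact hv.2 _ (hu.2 w hw)
    | star u _ hu => exact ⟨hu.2, by simpa using hu.1⟩
  refine closure_mono fun x hx => ?_
  have := (hmain x hx).1 1 (Submodule.subset_span ⟨1, hone, 1, B.one_mem, by simp⟩)
  simpa using this

/-- for an inclusion `B ⊆ A` of simple unital C*-algebras with a
finite-index conditional expectation and `C := C*(B ∪ C_A(B))`, any *-automorphism `θ`
of `C` with `θ(B) = B` whose restriction to `B` is outer is a free automorphism of `C`. -/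
theorem automorphism_of_genC_outer_on_B_is_free
    (B : StarSubalgebra ℂ A) (hBclosed : IsClosed (B : Set A))
    (hAsimple : IsSimpleCStar (Set.univ : Set A))
    (hBsimple : IsSimpleCStar (B : Set A))
    (E : A →ₗ[ℂ] A) (hE : IsCondExp (B : Set A) E)
    (nE : ℕ) (lE : Fin nE → A) (hlE : IsRightQB E lE)
    (θ : ↥(genC (B : Set A)) ≃⋆ₐ[ℂ] ↥(genC (B : Set A)))
    (hθB : ∀ x : ↥(genC (B : Set A)), (x : A) ∈ (B : Set A) ↔ ((θ x : A) ∈ (B : Set A)))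
    (hθouter : ¬ ∃ u : A, u ∈ (B : Set A) ∧ u ∈ unitary A ∧
        ∀ x : ↥(genC (B : Set A)), (x : A) ∈ (B : Set A) →
          (θ x : A) = u * (x : A) * star u) :
    ∀ a : ↥(genC (B : Set A)), (∀ x : ↥(genC (B : Set A)), a * x = θ x * a) → a = 0 := by
  intro a ha
  have hBC {x : A} (hx : x ∈ B) : x ∈ genC (B : Set A) :=
    StarSubalgebra.le_topologicalClosure _ (StarAlgebra.subset_adjoin ℂ _ (Or.inl hx))
  obtain ⟨hEB, -, -, hEmod⟩ := id hE
  have hleft (b : A) (hb : b ∈ B) (y : A) : E (b * y) = b * E y := by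
    simpa using hEmod b hb 1 B.one_mem y
  have hright (b : A) (hb : b ∈ B) (y : A) : E (y * b) = E y * b := by
    simpa using hEmod 1 B.one_mem b hb y
  have haB (x : genC (B : Set A)) : (a : A) * x = θ x * a := congrArg Subtype.val (ha x)
  -- A nonzero element of `B` implementing `θ` on `B` would give a unitary doing the same.
  have key (y : A) (hy : y ∈ B)
      (hint : ∀ x : genC (B : Set A), (x : A) ∈ B → y * (x : A) = θ x * y) : y = 0 := by
    by_contra hy0
    have hint' (x : genC (B : Set A)) (hx : (x : A) ∈ B) :
        (x : A) * star y = star y * θ x := by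
      have := congrArg star (hint (star x) (star_mem hx))
      simpa [map_star] using this
    obtain ⟨s, hs⟩ := exists_smul_mem_unitary hBclosed hBsimple hy hy0
      (fun b hb => by
        rw [mul_assoc, hint ⟨b, hBC hb⟩ hb, ← mul_assoc, ← hint' ⟨b, hBC hb⟩ hb, mul_assoc])
      (fun b hb => by
        obtain ⟨x, hx⟩ := θ.surjective ⟨b, hBC hb⟩
        have hxb : (θ x : A) = b := congrArg Subtype.val hx
        have hxB : (x : A) ∈ B := (hθB x).mpr (hxb ▸ hb)
        rw [← hxb, mul_assoc, ← hint' x hxB, ← mul_assoc, hint x hxB, mul_assoc])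
    refine hθouter ⟨s • y, B.smul_mem hy s, hs, fun x hx => ?_⟩
    rw [smul_mul_assoc, hint x hx, ← mul_smul_comm, mul_assoc, Unitary.mul_star_self_of_mem hs,
      mul_one]
  have hcent (c : A) (hc : c ∈ cent (B : Set A)) : E (a * c) = 0 := by
    refine key _ (hEB _) fun x hx => ?_
    rw [← hright _ hx, mul_assoc, hc x hx, ← mul_assoc, haB x, mul_assoc,
      hleft _ ((hθB x).mp hx)]
  have hspan (x : A)
      (hx : x ∈ Submodule.span ℂ {x | ∃ c ∈ cent (B : Set A), ∃ b ∈ B, x = c * b}) :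
      E (a * x) = 0 := by
    induction hx using Submodule.span_induction with
    | mem x hx =>
      obtain ⟨c, hc, b, hb, rfl⟩ := hx
      rw [← mul_assoc, hright b hb, hcent c hc, zero_mul]
    | zero => simp
    | add u v _ _ hu hv => rw [mul_add, map_add, hu, hv, add_zero]
    | smul r u _ hu => rw [mul_smul_comm, map_smul, hu, smul_zero]
  have hC (x : A) (hx : x ∈ genC (B : Set A)) : E (a * x) = 0 := by
    have hcl : IsClosed {x : A | E (a * x) = 0} :=
      isClosed_eq (hE.continuous.comp (continuous_const.mul continuous_id)) continuous_const
    exact closure_minimal (t := {x : A | E (a * x) = 0}) hspan hcl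
      (genC_subset_closure_span B hx)
  have h0 (x : A) : E (a * x) = 0 :=
    hE.apply_mul_eq_zero (hC _ (star_mem a.2)) x
  apply Subtype.ext
  rw [hlE (a : A)]
  simp [h0]

end RegularInclusion
end
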